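/- arXiv:1805.04261 — 7 statements merged into one kernel-verified Lean document; each statement's English description precedes it below -/
import Mathlib

section
/- For every integer d ≥ 1 and every sign pattern σ of length d+1, there exists exactly one sequence of admissible pairs ((pos_0, neg_0), ..., (pos_{d−1}, neg_{d−1})) for σ satisfying pos_0 + neg_0 = d; for this SAP the pair (pos_0, neg_0) equals the Descartes pair (c(σ), p(σ)) of σ; and the couple (σ, SAP) is realizable. -/
open Polynomial

/-- Number of sign changes among consecutive entries `s 0, …, s n`. -/
def signChanges (s : ℕ → ℤ) (n : ℕ) : ℕ :=
  ((Finset.range n).filter (fun i => s i * s (i + 1) < 0)).card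

/-- Number of sign preservations among consecutive entries `s 0, …, s n`. -/
def signPres (s : ℕ → ℤ) (n : ℕ) : ℕ :=
  ((Finset.range n).filter (fun i => 0 < s i * s (i + 1))).card

/-- `s` encodes a sign pattern of length `d+1` (entries `s 0, …, s d`, each `±1`,
first entry `+1`). -/
def IsSignPattern (d : ℕ) (s : ℕ → ℤ) : Prop :=
  s 0 = 1 ∧ ∀ i ≤ d, s i = 1 ∨ s i = -1

/-- `pn k = (pos_k, neg_k)`, `k = 0, …, d-1`, is a sequence of admissible pairs (SAP)
for the sign pattern `s` of length `d+1`: each pair is admissible for the truncated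
pattern `σ_k` (of length `d+1-k`, with sign changes `signChanges s (d-k)` and sign
preservations `signPres s (d-k)`), the last entry of `σ_k` is `(-1)^{pos_k}`, and the
Rolle-type inequalities and parity condition hold between consecutive pairs. -/
def IsSAP (d : ℕ) (s : ℕ → ℤ) (pn : ℕ → ℕ × ℕ) : Prop :=
  (∀ k < d,
    (pn k).1 ≤ signChanges s (d - k) ∧
    Even ((signChanges s (d - k) : ℤ) - (pn k).1) ∧
    (pn k).2 ≤ signPres s (d - k) ∧
    Even ((signPres s (d - k) : ℤ) - (pn k).2) ∧
    s (d - k) = (-1) ^ (pn k).1) ∧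
  (∀ k, k + 1 < d →
    (pn k).1 ≤ (pn (k + 1)).1 + 1 ∧
    (pn k).2 ≤ (pn (k + 1)).2 + 1 ∧
    (pn k).1 + (pn k).2 ≤ (pn (k + 1)).1 + (pn (k + 1)).2 + 1 ∧
    Even (((pn (k + 1)).1 : ℤ) + (pn (k + 1)).2 + 3 - (pn k).1 - (pn k).2))

/-- The `k`-th derivative of a real polynomial. -/
noncomputable def iterDeriv : ℕ → Polynomial ℝ → Polynomial ℝ
  | 0, P => P
  | k + 1, P => Polynomial.derivative (iterDeriv k P)

/-- `P` has exactly `pos` positive real roots and exactly `neg` negative real roots,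
all of them simple. -/
def CountRoots (P : Polynomial ℝ) (pos neg : ℕ) : Prop :=
  {x : ℝ | 0 < x ∧ P.eval x = 0}.ncard = pos ∧
  {x : ℝ | x < 0 ∧ P.eval x = 0}.ncard = neg ∧
  ∀ x : ℝ, P.eval x = 0 → (Polynomial.derivative P).eval x ≠ 0

/-- The couple (sign pattern `s`, SAP `pn`) of degree `d` is realizable: there is a
monic real polynomial of degree `d`, with all coefficients nonzero, whose coefficient
signs define the pattern `s` (the sign of the coefficient of `x^(d-i)` is `s i`), and
such that for `k = 0, …, d-1` the `k`-th derivative has exactly `(pn k).1` positive and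
`(pn k).2` negative real roots, all simple. -/
def Realizable (d : ℕ) (s : ℕ → ℤ) (pn : ℕ → ℕ × ℕ) : Prop :=
  ∃ P : Polynomial ℝ, P.Monic ∧ P.natDegree = d ∧
    (∀ j ≤ d, P.coeff j ≠ 0) ∧
    (∀ i ≤ d, 0 < (s i : ℝ) * P.coeff (d - i)) ∧
    ∀ k < d, CountRoots (iterDeriv k P) (pn k).1 (pn k).2

theorem aux_succ (s : ℕ → ℤ) (n : ℕ) (h : s n = 1 ∨ s n = -1) (h' : s (n+1) = 1 ∨ s (n+1) = -1) :
    (s n * s (n+1) < 0 ∧ s (n+1) = - s n ∧ signChanges s (n+1) = signChanges s n + 1 ∧ signPres s (n+1) = signPres s n) ∨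
    (0 < s n * s (n+1) ∧ s (n+1) = s n ∧ signChanges s (n+1) = signChanges s n ∧ signPres s (n+1) = signPres s n + 1) := by
  unfold signChanges signPres
  rw [Finset.range_add_one, Finset.filter_insert, Finset.filter_insert]
  rcases h with h | h <;> rcases h' with h' | h' <;> simp [h, h']

theorem aux_sum (d : ℕ) (s : ℕ → ℤ) (hs : IsSignPattern d s) (n : ℕ) (hn : n ≤ d) :
    signChanges s n + signPres s n = n ∧ s n = (-1) ^ signChanges s n := by
  induction n with
  | zero => simp [signChanges, signPres, hs.1]
  | succ n ih =>
    obtain ⟨h1, h2⟩ := ih (by omega)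
    rcases aux_succ s n (hs.2 n (by omega)) (hs.2 _ hn) with ⟨_, h, hc, hp⟩ | ⟨_, h, hc, hp⟩
    · rw [hc, hp, h, h2, pow_succ]; exact ⟨by omega, by ring⟩
    · rw [hc, hp, h]; exact ⟨by omega, h2⟩

theorem aux_root (Q : ℝ[X]) (a b : ℝ) (hab : a < b) (h : Q.eval a * Q.eval b < 0) :
    ∃ x, a < x ∧ x < b ∧ Q.eval x = 0 := by
  have hc : ContinuousOn (fun x => Q.eval x) (Set.Icc a b) := Q.continuous.continuousOn
  rcases mul_neg_iff.1 h with ⟨h1, h2⟩ | ⟨h1, h2⟩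
  · obtain ⟨x, hx, hx'⟩ := intermediate_value_Ioo' hab.le hc (show (0:ℝ) ∈ _ from ⟨h2, h1⟩)
    exact ⟨x, hx.1, hx.2, hx'⟩
  · obtain ⟨x, hx, hx'⟩ := intermediate_value_Ioo hab.le hc (show (0:ℝ) ∈ _ from ⟨h1, h2⟩)
    exact ⟨x, hx.1, hx.2, hx'⟩

theorem aux_count (n : ℕ) (s : ℕ → ℤ) (hs : ∀ i ≤ n, s i = 1 ∨ s i = -1) (Q : ℝ[X])
    (hQ : Q ≠ 0) (hdeg : Q.natDegree ≤ n) (q : ℝ) (q0 : 0 < q) (q1 : q < 1)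
    (hp : ∀ i ≤ n, 0 < (s i : ℝ) * Q.eval (q ^ (2 * i)))
    (hm : ∀ i ≤ n, 0 < (s i : ℝ) * (-1) ^ (n - i) * Q.eval (-q ^ (2 * i))) :
    CountRoots Q (signChanges s n) (signPres s n) := by
  have key : ∀ i, ∃ r : ℝ, i < n → Q.eval r = 0 ∧ q ^ (2 * (i + 1)) < |r| ∧ |r| < q ^ (2 * i) ∧
      (s i * s (i+1) < 0 → 0 < r) ∧ (0 < s i * s (i+1) → r < 0) := by
    intro i
    by_cases hi : i < n
    swap
    · exact ⟨0, fun h => absurd h hi⟩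
    have hlt : q ^ (2 * (i + 1)) < q ^ (2 * i) := pow_lt_pow_right_of_lt_one₀ q0 q1 (by omega)
    have hpos : 0 < q ^ (2 * (i + 1)) := by positivity
    have p1 := hp i hi.le
    have p2 := hp (i+1) hi
    have m1 := hm i hi.le
    have m2 := hm (i+1) hi
    rw [show n - i = (n - (i+1)) + 1 by omega, pow_succ] at m1
    have hsq : ((-1:ℝ) ^ (n - (i+1))) = 1 ∨ ((-1:ℝ) ^ (n - (i+1))) = -1 := neg_one_pow_eq_or ℝ _
    rcases aux_succ s i (hs i hi.le) (hs _ hi) with ⟨hh, h, -, -⟩ | ⟨hh, h, -, -⟩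
    · have : Q.eval (q ^ (2 * (i+1))) * Q.eval (q ^ (2 * i)) < 0 := by
        rcases hs i hi.le with h0 | h0 <;> rw [h0] at h p1 <;> rw [h] at p2 <;> push_cast at p1 p2 <;> nlinarith
      obtain ⟨x, hx1, hx2, hx3⟩ := aux_root Q _ _ hlt this
      have hx0 : 0 < x := hpos.trans hx1
      refine ⟨x, fun _ => ⟨hx3, ?_, ?_, fun _ => hx0, fun h => by omega⟩⟩ <;> rwa [abs_of_pos hx0]
    · have : Q.eval (-q ^ (2 * i)) * Q.eval (-q ^ (2 * (i+1))) < 0 := by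
        rcases hs i hi.le with h0 | h0 <;> rw [h0] at h m1 <;> rw [h] at m2 <;>
          rcases hsq with e | e <;> rw [e] at m1 m2 <;> push_cast at m1 m2 <;> nlinarith
      obtain ⟨x, hx1, hx2, hx3⟩ := aux_root Q _ _ (neg_lt_neg hlt) this
      have hx0 : x < 0 := by linarith
      refine ⟨x, fun _ => ⟨hx3, ?_, ?_, fun h => by omega, fun _ => hx0⟩⟩ <;> rw [abs_of_neg hx0] <;> linarith
  choose r hr using key
  have hlt : ∀ i j, i < n → j < n → i < j → |r j| < |r i| := by
    intro i j hi hj hij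
    calc |r j| < q ^ (2 * j) := (hr j hj).2.2.1
      _ ≤ q ^ (2 * (i+1)) := pow_le_pow_of_le_one q0.le q1.le (by omega)
      _ < |r i| := (hr i hi).2.1
  have hinj : Set.InjOn r (Finset.range n) := by
    intro i hi j hj hij
    simp only [Finset.coe_range, Set.mem_Iio] at hi hj
    rcases lt_trichotomy i j with h | h | h
    · have := hlt i j hi hj h; rw [hij] at this; exact absurd this (lt_irrefl _)
    · exact h
    · have := hlt j i hj hi h; rw [hij] at this; exact absurd this (lt_irrefl _)
  have hsub : (Finset.range n).image r ⊆ Q.roots.toFinset := by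
    intro x hx
    obtain ⟨i, hi, rfl⟩ := Finset.mem_image.1 hx
    simp [hQ, (hr i (Finset.mem_range.1 hi)).1]
  have hcard : ((Finset.range n).image r).card = n := by
    rw [Finset.card_image_of_injOn hinj, Finset.card_range]
  have hle : Q.roots.card ≤ n := (Q.card_roots').trans hdeg
  have hle2 := Multiset.toFinset_card_le Q.roots
  have hle3 := Finset.card_le_card hsub
  have heq : (Finset.range n).image r = Q.roots.toFinset :=
    Finset.eq_of_subset_of_card_le hsub (by omega)
  have hnd : Q.roots.Nodup := Multiset.toFinset_card_eq_card_iff_nodup.1 (by omega)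
  have hroot : ∀ x, Q.eval x = 0 ↔ ∃ i < n, r i = x := by
    intro x
    have : x ∈ Q.roots.toFinset ↔ Q.eval x = 0 := by simp [hQ]
    rw [← this, ← heq]; simp
  have hne : ∀ i < n, s i * s (i+1) < 0 ∨ 0 < s i * s (i+1) := by
    intro i hi
    rcases aux_succ s i (hs i hi.le) (hs _ hi) with h | h
    · exact Or.inl h.1
    · exact Or.inr h.1
  refine ⟨?_, ?_, ?_⟩
  · have : {x : ℝ | 0 < x ∧ Q.eval x = 0} =
        (((Finset.range n).filter (fun i => s i * s (i + 1) < 0)).image r : Finset ℝ) := by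
      ext x
      simp only [Set.mem_ofPred_eq, hroot, Finset.coe_image, Set.mem_image, Finset.mem_coe, Finset.mem_filter, Finset.mem_range]
      constructor
      · rintro ⟨h0, i, hi, rfl⟩
        refine ⟨i, ⟨hi, (hne i hi).resolve_right fun h => ?_⟩, rfl⟩
        exact absurd ((hr i hi).2.2.2.2 h) (not_lt.2 h0.le)
      · rintro ⟨i, ⟨hi, h⟩, rfl⟩
        exact ⟨(hr i hi).2.2.2.1 h, i, hi, rfl⟩
    rw [this, Set.ncard_coe_finset, Finset.card_image_of_injOn (hinj.mono (Finset.coe_subset.2 (Finset.filter_subset _ _))), signChanges]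
  · have : {x : ℝ | x < 0 ∧ Q.eval x = 0} =
        (((Finset.range n).filter (fun i => 0 < s i * s (i + 1))).image r : Finset ℝ) := by
      ext x
      simp only [Set.mem_ofPred_eq, hroot, Finset.coe_image, Set.mem_image, Finset.mem_coe, Finset.mem_filter, Finset.mem_range]
      constructor
      · rintro ⟨h0, i, hi, rfl⟩
        refine ⟨i, ⟨hi, (hne i hi).resolve_left fun h => ?_⟩, rfl⟩
        exact absurd ((hr i hi).2.2.2.1 h) (not_lt.2 h0.le)
      · rintro ⟨i, ⟨hi, h⟩, rfl⟩
        exact ⟨(hr i hi).2.2.2.2 h, i, hi, rfl⟩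
    rw [this, Set.ncard_coe_finset, Finset.card_image_of_injOn (hinj.mono (Finset.coe_subset.2 (Finset.filter_subset _ _))), signPres]
  · intro x hx hx'
    have h1 : 1 < Q.rootMultiplicity x := (Polynomial.one_lt_rootMultiplicity_iff_isRoot hQ).2 ⟨hx, hx'⟩
    have h2 := Multiset.nodup_iff_count_le_one.1 hnd x
    rw [Polynomial.count_roots] at h2
    omega

theorem aux_lim (n : ℕ) (b : ℕ → ℝ) (i : ℕ) (hi : i ≤ n) (c : ℝ) (h : 0 < c * b i) :
    ∀ᶠ q : ℝ in nhdsWithin 0 (Set.Ioi 0),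
      0 < c * ∑ j ∈ Finset.range (n+1), b j * q ^ (((j:ℤ) - i).natAbs ^ 2) := by
  apply nhdsWithin_le_nhds
  have hc : Continuous fun q : ℝ => c * ∑ j ∈ Finset.range (n+1), b j * q ^ (((j:ℤ) - i).natAbs ^ 2) := by
    fun_prop
  apply (hc.tendsto 0).eventually_const_lt
  rw [Finset.sum_eq_single i]
  · simpa using h
  · intro j _ hj
    have : ((j:ℤ) - i).natAbs ^ 2 ≠ 0 := pow_ne_zero _ (by omega)
    rw [zero_pow this, mul_zero]
  · intro h; exact absurd (Finset.mem_range.2 (by omega)) h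

theorem aux_eval (n : ℕ) (b : ℕ → ℝ) (Q : ℝ[X]) (q : ℝ) (hdeg : Q.natDegree ≤ n)
    (hb : ∀ j ≤ n, Q.coeff (n - j) = b j * q ^ (j ^ 2)) (i : ℕ) (hi : i ≤ n) (e : ℝ) :
    Q.eval (e * q ^ (2 * i)) = q ^ (i ^ 2 + 2 * i * (n - i)) *
      ∑ j ∈ Finset.range (n+1), (b j * e ^ (n - j)) * q ^ (((j:ℤ) - i).natAbs ^ 2) := by
  rw [Polynomial.eval_eq_sum_range' (Nat.lt_succ_of_le hdeg), ← Finset.sum_range_reflect, Finset.mul_sum]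
  apply Finset.sum_congr rfl
  intro j hj
  have hj' : j ≤ n := by have := Finset.mem_range.1 hj; omega
  rw [show n.succ - 1 - j = n - j by omega, hb j hj', mul_pow, ← pow_mul]
  have : j ^ 2 + 2 * i * (n - j) = i ^ 2 + 2 * i * (n - i) + ((j:ℤ) - i).natAbs ^ 2 := by
    zify [hi, hj']
    rw [sq_abs]; ring
  calc b j * q ^ j ^ 2 * (e ^ (n - j) * q ^ (2 * i * (n - j)))
      = b j * e ^ (n - j) * q ^ (j ^ 2 + 2 * i * (n - j)) := by rw [pow_add]; ring
    _ = _ := by rw [this, pow_add]; ring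

theorem aux_iter (k : ℕ) (P : ℝ[X]) : iterDeriv k P = derivative^[k] P := by
  induction k with
  | zero => rfl
  | succ k ih => rw [Function.iterate_succ_apply', ← ih]; rfl

theorem aux_real (d : ℕ) (s : ℕ → ℤ) (hs : IsSignPattern d s) :
    Realizable d s (fun k => (signChanges s (d - k), signPres s (d - k))) := by
  set b : ℕ → ℕ → ℝ := fun k j => ((d - j).descFactorial k : ℝ) * s j with hbdef
  have hss : ∀ i ≤ d, (s i : ℝ) * s i = 1 := by
    intro i hi
    rcases hs.2 i hi with h | h <;> simp [h]
  have hdf : ∀ k i, i ≤ d - k → k < d → (0:ℝ) < ((d - i).descFactorial k : ℝ) := by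
    intro k i hi hk
    have : (d - i).descFactorial k ≠ 0 := by
      rw [Ne, Nat.descFactorial_eq_zero_iff_lt]; omega
    positivity
  have ev1 : ∀ k ∈ Finset.range d, ∀ i ∈ Finset.range (d - k + 1), ∀ᶠ q : ℝ in nhdsWithin 0 (Set.Ioi 0),
      0 < (s i : ℝ) * ∑ j ∈ Finset.range (d - k + 1), (b k j * 1 ^ (d - k - j)) * q ^ (((j:ℤ) - i).natAbs ^ 2) := by
    intro k hk i hi
    rw [Finset.mem_range] at hk hi
    apply aux_lim (d - k) (fun j => b k j * 1 ^ (d - k - j)) i (by omega)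
    have := hdf k i (by omega) hk
    have h2 := hss i (by omega)
    simp only [hbdef]
    rw [one_pow]
    nlinarith
  have ev2 : ∀ k ∈ Finset.range d, ∀ i ∈ Finset.range (d - k + 1), ∀ᶠ q : ℝ in nhdsWithin 0 (Set.Ioi 0),
      0 < ((s i : ℝ) * (-1) ^ (d - k - i)) * ∑ j ∈ Finset.range (d - k + 1), (b k j * (-1) ^ (d - k - j)) * q ^ (((j:ℤ) - i).natAbs ^ 2) := by
    intro k hk i hi
    rw [Finset.mem_range] at hk hi
    apply aux_lim (d - k) (fun j => b k j * (-1) ^ (d - k - j)) i (by omega)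
    have := hdf k i (by omega) hk
    have h2 := hss i (by omega)
    simp only [hbdef]
    rcases neg_one_pow_eq_or ℝ (d - k - i) with e | e <;> rw [e] <;> nlinarith
  have E1 := (Filter.eventually_all_finset _).2 fun k hk => (Filter.eventually_all_finset _).2 (ev1 k hk)
  have E2 := (Filter.eventually_all_finset _).2 fun k hk => (Filter.eventually_all_finset _).2 (ev2 k hk)
  have E3 : ∀ᶠ q : ℝ in nhdsWithin 0 (Set.Ioi 0), q ∈ Set.Ioo (0:ℝ) 1 := Ioo_mem_nhdsGT one_pos
  obtain ⟨q, ⟨H1, H2⟩, q0, q1⟩ := ((E1.and E2).and E3).exists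
  set P : ℝ[X] := ∑ j ∈ Finset.range (d+1), C ((s (d - j) : ℝ) * q ^ ((d - j) ^ 2)) * X ^ j with hP
  have hco : ∀ m, P.coeff m = if m ≤ d then (s (d - m) : ℝ) * q ^ ((d - m) ^ 2) else 0 := by
    intro m
    simp only [hP, Polynomial.finsetSum_coeff, Polynomial.coeff_C_mul, Polynomial.coeff_X_pow, mul_ite, mul_one, mul_zero, Finset.sum_ite_eq, Finset.mem_range, Nat.lt_succ_iff]
  have hcd : P.coeff d = 1 := by simp [hco, hs.1]
  have hdeg : P.natDegree = d := by
    apply le_antisymm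
    · rw [Polynomial.natDegree_le_iff_coeff_eq_zero]
      intro m hm
      rw [hco, if_neg (by omega)]
    · exact Polynomial.le_natDegree_of_ne_zero (by rw [hcd]; exact one_ne_zero)
  have hsign : ∀ i ≤ d, 0 < (s i : ℝ) * P.coeff (d - i) := by
    intro i hi
    rw [hco, if_pos (by omega), show d - (d - i) = i by omega, ← mul_assoc, hss i hi]
    positivity
  refine ⟨P, ?_, hdeg, ?_, hsign, ?_⟩
  · rw [Polynomial.Monic, Polynomial.leadingCoeff, hdeg, hcd]
  · intro j hj h0
    have := hsign (d - j) (by omega)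
    rw [show d - (d - j) = j by omega, h0] at this
    simp at this
  · intro k hk
    have hdk : (iterDeriv k P).natDegree ≤ d - k := by
      rw [aux_iter, ← hdeg]; exact Polynomial.natDegree_iterate_derivative P k
    have hbk : ∀ j ≤ d - k, (iterDeriv k P).coeff (d - k - j) = b k j * q ^ (j ^ 2) := by
      intro j hj
      rw [aux_iter, Polynomial.coeff_iterate_derivative, hco, if_pos (by omega),
        show d - k - j + k = d - j by omega, show d - (d - j) = j by omega, nsmul_eq_mul]
      simp only [hbdef]; ring
    have hne : iterDeriv k P ≠ 0 := by
      intro h0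
      have := hbk 0 (by omega)
      rw [h0] at this
      have h2 := hdf k 0 (by omega) hk
      simp only [hbdef, hs.1, Polynomial.coeff_zero] at this
      norm_num at this
      rw [Nat.sub_zero] at h2
      linarith
    refine aux_count (d - k) s (fun i hi => hs.2 i (by omega)) _ hne hdk q q0 q1 ?_ ?_
    · intro i hi
      have h := H1 k (Finset.mem_range.2 hk) i (Finset.mem_range.2 (by omega))
      have e := aux_eval (d - k) (b k) _ q hdk hbk i hi 1
      rw [one_mul] at e
      rw [e, mul_left_comm]
      positivity
    · intro i hi
      have h := H2 k (Finset.mem_range.2 hk) i (Finset.mem_range.2 (by omega))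
      have e := aux_eval (d - k) (b k) _ q hdk hbk i hi (-1)
      rw [neg_one_mul] at e
      rw [e, mul_left_comm]
      positivity

/-- For every sign pattern of length `d+1`, `d ≥ 1`, there is a unique SAP with
`pos_0 + neg_0 = d`; its first pair is the Descartes pair, and it is realizable. -/
theorem stmt0 (d : ℕ) (hd : 1 ≤ d) (s : ℕ → ℤ) (hs : IsSignPattern d s) :
    ∃ pn : ℕ → ℕ × ℕ,
      IsSAP d s pn ∧ (pn 0).1 + (pn 0).2 = d ∧
      (pn 0).1 = signChanges s d ∧ (pn 0).2 = signPres s d ∧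
      Realizable d s pn ∧
      ∀ pn' : ℕ → ℕ × ℕ, IsSAP d s pn' → (pn' 0).1 + (pn' 0).2 = d →
        ∀ k < d, pn' k = pn k := by
  refine ⟨fun k => (signChanges s (d - k), signPres s (d - k)), ⟨?_, ?_⟩, ?_, rfl, rfl,
    aux_real d s hs, ?_⟩
  · intro k hk
    exact ⟨le_rfl, by simp, le_rfl, by simp, (aux_sum d s hs _ (by omega)).2⟩
  · intro k hk
    obtain ⟨m, hm⟩ : ∃ m, d - k = m + 1 := ⟨d - k - 1, by omega⟩
    have hm' : d - (k + 1) = m := by omega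
    simp only [hm, hm']
    have h := aux_succ s m (hs.2 _ (by omega)) (hs.2 _ (by omega))
    refine ⟨by omega, by omega, by omega, ⟨1, by omega⟩⟩
  · exact (aux_sum d s hs _ (by omega)).1
  · intro pn' h h0 k hk
    have hsum : ∀ k < d, d - k ≤ (pn' k).1 + (pn' k).2 := by
      intro k
      induction k with
      | zero => intro _; omega
      | succ k ih =>
        intro hk
        have := ih (by omega)
        have h2 := (h.2 k hk).2.2.1
        omega
    have h1 := hsum k hk
    obtain ⟨h2, -, h3, -⟩ := h.1 k hk
    have h4 := (aux_sum d s hs (d - k) (by omega)).1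
    exact Prod.ext (by simp only; omega) (by simp only; omega)
end

section
/- Let d be an odd positive integer, let σ be a sign pattern of length d+1, and let U be a SAP for σ such that the couple (σ, U) is realizable by some polynomial. Let σ* (resp. σ†) denote the sign pattern of length d+2 obtained from σ by appending a sign +1 (resp. −1) on the right. Then the couple (σ*, ((0,0), U)) is realizable and the couple (σ†, ((1,1), U)) is realizable, where ((a,b), U) denotes the sequence of d+1 pairs beginning with (a,b) and followed by the pairs of U. -/
open Polynomial

open Filter in
lemma oneSided (f f' : ℝ → ℝ) (hf : ∀ x, HasDerivAt f (f' x) x)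
    (h' : Tendsto f' atTop atTop) (h : Tendsto f atTop atTop) :
    ∃ M : ℝ, 0 < M ∧ (∀ x, 0 ≤ x → -M ≤ f x) ∧
      ∀ c, M < c → ∃ x0, 0 < x0 ∧ f x0 = c ∧ ∀ y, 0 ≤ y → f y = c → y = x0 ∧ f' y ≠ 0 := by
  have hc : Continuous f := continuous_iff_continuousAt.2 fun x => (hf x).continuousAt
  obtain ⟨R, hR⟩ := eventually_atTop.1 ((h'.eventually_gt_atTop 0).and (eventually_gt_atTop 0))
  have hR0 : 0 < R := (hR R le_rfl).2
  obtain ⟨B, hB⟩ := (isCompact_Icc (a := (0:ℝ)) (b := R)).exists_bound_of_continuousOn hc.continuousOn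
  have hmono : StrictMonoOn f (Set.Ici R) := by
    apply strictMonoOn_of_deriv_pos (convex_Ici R) hc.continuousOn
    intro x hx
    rw [interior_Ici] at hx
    rw [(hf x).deriv]
    exact (hR x (le_of_lt hx)).1
  have hb : ∀ x, 0 ≤ x → x ≤ R → -B ≤ f x ∧ f x ≤ B := by
    intro x h0 h1
    have := hB x ⟨h0, h1⟩
    rw [Real.norm_eq_abs] at this
    exact abs_le.1 this
  have hRb := hb R hR0.le le_rfl
  refine ⟨B + 1, by linarith, ?_, ?_⟩
  · intro x hx
    rcases le_total x R with hxR | hxR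
    · linarith [(hb x hx hxR).1]
    · have := hmono.monotoneOn (Set.mem_Ici.2 le_rfl) (Set.mem_Ici.2 hxR) hxR
      linarith
  · intro c hcM
    obtain ⟨T, hT1, hT2⟩ := ((h.eventually_ge_atTop c).and (eventually_ge_atTop R)).exists
    obtain ⟨x0, hx0, hx0c⟩ := intermediate_value_Icc hT2 hc.continuousOn
      (show c ∈ Set.Icc (f R) (f T) from ⟨by linarith, hT1⟩)
    refine ⟨x0, lt_of_lt_of_le hR0 hx0.1, hx0c, ?_⟩
    intro y hy hyc
    have hyR : R ≤ y := by
      by_contra hlt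
      have := (hb y hy (not_le.1 hlt).le).2
      linarith
    refine ⟨hmono.injOn (Set.mem_Ici.2 hyR) (Set.mem_Ici.2 hx0.1) (hyc.trans hx0c.symm), ?_⟩
    exact (hR y hyR).1.ne'

lemma iterDeriv_succ' (k : ℕ) (P : Polynomial ℝ) :
    iterDeriv (k + 1) P = iterDeriv k (derivative P) := by
  induction k with
  | zero => rfl
  | succ k ih => rw [iterDeriv, ih]; rfl

lemma iterDeriv_C_mul (k : ℕ) (a : ℝ) (P : Polynomial ℝ) :
    iterDeriv k (C a * P) = C a * iterDeriv k P := by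
  induction k with
  | zero => rfl
  | succ k ih => rw [iterDeriv, ih, derivative_C_mul]; rfl

lemma CountRoots.C_mul {P : Polynomial ℝ} {p n : ℕ} (h : CountRoots P p n) (a : ℝ) (ha : a ≠ 0) :
    CountRoots (C a * P) p n := by
  simpa [CountRoots, ha, derivative_C_mul] using h

lemma exists_prim (P : Polynomial ℝ) (d : ℕ) (hP : P.natDegree = d) (hm : P.Monic) :
    ∃ Q : Polynomial ℝ, Q.coeff 0 = 0 ∧ (∀ j, Q.coeff (j+1) = ((d:ℝ)+1) * P.coeff j / ((j:ℝ)+1)) := by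
  refine ⟨∑ i ∈ Finset.range (d+1), monomial (i+1) (((d:ℝ)+1) * P.coeff i / ((i:ℝ)+1)), ?_, ?_⟩
  · simp [finset_sum_coeff, coeff_monomial]
  · intro j
    simp only [finset_sum_coeff, coeff_monomial, add_left_inj, Finset.sum_ite_eq', Finset.mem_range]
    split_ifs with h
    · rfl
    · rw [coeff_eq_zero_of_natDegree_lt (by omega)]; simp

lemma build (d : ℕ) (s : ℕ → ℤ) (pn : ℕ → ℕ × ℕ) (P Q : Polynomial ℝ)
    (hm : P.Monic) (hdeg : P.natDegree = d) (hnz : ∀ j ≤ d, P.coeff j ≠ 0)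
    (hsg : ∀ i ≤ d, 0 < (s i : ℝ) * P.coeff (d - i))
    (hcr : ∀ k < d, CountRoots (iterDeriv k P) (pn k).1 (pn k).2)
    (hQ : ∀ j, Q.coeff (j+1) = ((d:ℝ)+1) * P.coeff j / ((j:ℝ)+1))
    (hQm : Q.Monic) (hQd : Q.natDegree = d + 1) (hQ' : derivative Q = C ((d:ℝ)+1) * P)
    (e : ℤ) (he : 0 < (e : ℝ) * Q.coeff 0) (q : ℕ × ℕ) (hq : CountRoots Q q.1 q.2) :
    Realizable (d + 1) (fun i => if i = d + 1 then e else s i)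
      (fun k => if k = 0 then q else pn (k - 1)) := by
  refine ⟨Q, hQm, hQd, ?_, ?_, ?_⟩
  · rintro (_ | j) hj
    · rintro h0; simp [h0] at he
    · rw [hQ]
      have := hnz j (by omega)
      positivity
  · intro i hi
    by_cases h : i = d + 1
    · subst h; simpa using he
    · have e1 : d + 1 - i = (d - i) + 1 := by omega
      simp only [h, if_false]
      rw [e1, hQ]
      have := hsg i (by omega)
      have h2 : (s i : ℝ) * (((d:ℝ)+1) * P.coeff (d - i) / (((d - i : ℕ):ℝ)+1))
        = ((s i : ℝ) * P.coeff (d - i)) * (((d:ℝ)+1) / (((d - i : ℕ):ℝ)+1)) := by ring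
      rw [h2]
      positivity
  · rintro (_ | k) hk
    · simpa [iterDeriv] using hq
    · simp only [Nat.add_eq_zero_iff, one_ne_zero, and_false, if_false, Nat.add_sub_cancel]
      rw [iterDeriv_succ', hQ', iterDeriv_C_mul]
      exact (hcr k (by omega)).C_mul _ (by positivity)

open Filter in
lemma key (d : ℕ) (hd : 0 < d) (hodd : Odd d) (P Q : Polynomial ℝ)
    (hm : P.Monic) (hdeg : P.natDegree = d)
    (hQm : Q.Monic) (hQd : Q.natDegree = d + 1) (hQ' : derivative Q = C ((d:ℝ)+1) * P) :
    ∃ M : ℝ, 0 < M ∧ (∀ x, -M ≤ Q.eval x) ∧ 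
      ∀ c, M < c → CountRoots (Q - C c) 1 1 := by
  have hd1 : (0:ℝ) < (d:ℝ) + 1 := by positivity
  have hnX : (-X : Polynomial ℝ).natDegree = 1 := by simp
  have t1 : Tendsto (fun x => P.eval x) atTop atTop :=
    P.tendsto_atTop_of_leadingCoeff_nonneg (natDegree_pos_iff_degree_pos.1 (by omega))
      (by rw [hm.leadingCoeff]; norm_num)
  have t2 : Tendsto (fun x => Q.eval x) atTop atTop :=
    Q.tendsto_atTop_of_leadingCoeff_nonneg (natDegree_pos_iff_degree_pos.1 (by omega))
      (by rw [hQm.leadingCoeff]; norm_num)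
  have t3 : Tendsto (fun x => (-(P.comp (-X))).eval x) atTop atTop := by
    apply tendsto_atTop_of_leadingCoeff_nonneg
    · apply natDegree_pos_iff_degree_pos.1
      rw [natDegree_neg, natDegree_comp, hnX]; omega
    · rw [leadingCoeff_neg, leadingCoeff_comp (by rw [hnX]; norm_num), hm.leadingCoeff, hdeg]
      simp [hodd.neg_one_pow]
  have t4 : Tendsto (fun x => (Q.comp (-X)).eval x) atTop atTop := by
    apply tendsto_atTop_of_leadingCoeff_nonneg
    · apply natDegree_pos_iff_degree_pos.1
      rw [natDegree_comp, hnX]; omega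
    · rw [leadingCoeff_comp (by rw [hnX]; norm_num), hQm.leadingCoeff, hQd]
      simp [hodd.add_one.neg_one_pow]
  obtain ⟨M1, hM1, hl1, hr1⟩ := oneSided (fun x => Q.eval x) (fun x => ((d:ℝ)+1) * P.eval x)
    (fun x => by have := Q.hasDerivAt x; rw [hQ'] at this; simpa using this)
    (t1.const_mul_atTop hd1) t2
  obtain ⟨M2, hM2, hl2, hr2⟩ := oneSided (fun x => (Q.comp (-X)).eval x)
    (fun x => ((d:ℝ)+1) * (-(P.comp (-X))).eval x)
    (fun x => by
      have := (Q.comp (-X)).hasDerivAt x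
      rw [derivative_comp, hQ'] at this; simpa using this)
    (t3.const_mul_atTop hd1) t4
  simp only [eval_comp, eval_neg, eval_X] at hl2 hr2
  refine ⟨max M1 M2, lt_max_of_lt_left hM1, ?_, ?_⟩
  · intro x
    rcases le_total 0 x with h | h
    · linarith [hl1 x h, le_max_left M1 M2]
    · have := hl2 (-x) (by linarith)
      rw [neg_neg] at this
      linarith [le_max_right M1 M2]
  · intro c hc
    obtain ⟨x1, h1, h1c, u1⟩ := hr1 c (lt_of_le_of_lt (le_max_left _ _) hc)
    obtain ⟨x2, h2, h2c, u2⟩ := hr2 c (lt_of_le_of_lt (le_max_right _ _) hc)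
    refine ⟨?_, ?_, ?_⟩
    · rw [Set.ncard_eq_one]
      refine ⟨x1, Set.ext fun y => ?_⟩
      simp only [Set.mem_setOf_eq, Set.mem_singleton_iff, eval_sub, eval_C, sub_eq_zero]
      constructor
      · rintro ⟨a, b⟩; exact (u1 y a.le b).1
      · rintro rfl; exact ⟨h1, h1c⟩
    · rw [Set.ncard_eq_one]
      refine ⟨-x2, Set.ext fun y => ?_⟩
      simp only [Set.mem_setOf_eq, Set.mem_singleton_iff, eval_sub, eval_C, sub_eq_zero]
      constructor
      · rintro ⟨a, b⟩
        have := (u2 (-y) (by linarith) (by rwa [neg_neg])).1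
        linarith
      · rintro rfl; exact ⟨by linarith, h2c⟩
    · intro x hx
      simp only [eval_sub, eval_C, sub_eq_zero] at hx
      rw [derivative_sub, derivative_C, sub_zero, hQ', eval_mul, eval_C]
      rcases le_total 0 x with h | h
      · exact (u1 x h hx).2
      · have := (u2 (-x) (by linarith) (by rwa [neg_neg])).2
        rw [neg_neg] at this
        intro h0
        apply this
        linarith

/-- Extension of a realizable couple (sign pattern, SAP) of odd degree `d` by
appending a `+` (resp. a `-`) sign and the pair `(0,0)` (resp. `(1,1)`). -/
theorem stmt2 (d : ℕ) (hd : 0 < d) (hdodd : Odd d) (s : ℕ → ℤ)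
    (hs : IsSignPattern d s) (pn : ℕ → ℕ × ℕ) (hpn : IsSAP d s pn)
    (hre : Realizable d s pn) :
    Realizable (d + 1) (fun i => if i = d + 1 then 1 else s i)
      (fun k => if k = 0 then (0, 0) else pn (k - 1)) ∧
    Realizable (d + 1) (fun i => if i = d + 1 then -1 else s i)
      (fun k => if k = 0 then (1, 1) else pn (k - 1)) := by

  obtain ⟨P, hm, hdeg, hnz, hsg, hcr⟩ := hre
  obtain ⟨Q, hQ0, hQ⟩ := exists_prim P d hdeg hm
  have hd1 : (0:ℝ) < (d:ℝ) + 1 := by positivity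
  have hlead : Q.coeff (d + 1) = 1 := by
    have : P.coeff d = 1 := by rw [← hdeg]; exact hm
    rw [hQ, this]; field_simp
  have hle : Q.natDegree ≤ d + 1 := by
    rw [natDegree_le_iff_coeff_eq_zero]
    rintro (_ | N) hN
    · exact hQ0
    · rw [hQ, coeff_eq_zero_of_natDegree_lt (by omega)]; simp
  have hQm : ∀ c, (Q - C c).Monic ∧ (Q - C c).natDegree = d + 1 := by
    intro c
    have h1 : (Q - C c).coeff (d + 1) = 1 := by simp [hlead]
    have h2 : (Q - C c).natDegree ≤ d + 1 := by rw [natDegree_sub_C]; exact hle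
    exact ⟨monic_of_natDegree_le_of_coeff_eq_one _ h2 h1,
      natDegree_eq_of_le_of_coeff_ne_zero h2 (by rw [h1]; norm_num)⟩
  have hQ' : derivative Q = C ((d:ℝ)+1) * P := by
    ext n
    rw [coeff_derivative, hQ, coeff_C_mul]
    field_simp
  have hc : ∀ c j, (Q - C c).coeff (j+1) = ((d:ℝ)+1) * P.coeff j / ((j:ℝ)+1) := by
    intro c j; rw [← hQ]; simp
  have hd' : ∀ c, derivative (Q - C c) = C ((d:ℝ)+1) * P := by
    intro c; rw [derivative_sub, derivative_C, sub_zero, hQ']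
  have h0 := hQm 0
  rw [C_0, sub_zero] at h0
  obtain ⟨M, hM, hlow, hroots⟩ := key d hd hdodd P Q hm hdeg h0.1 h0.2 hQ'
  constructor
  · refine build d s pn P (Q - C (-(M+1))) hm hdeg hnz hsg hcr (hc _) (hQm _).1 (hQm _).2 (hd' _)
      1 ?_ (0,0) ?_
    · simp [hQ0]; linarith
    · have hpos : ∀ x, (Q - C (-(M+1))).eval x ≠ 0 := by
        intro x
        have := hlow x
        rw [eval_sub, eval_C]
        intro h; linarith
      refine ⟨?_, ?_, fun x hx => absurd hx (hpos x)⟩ <;> simp only [hpos, and_false, Set.setOf_false, Set.ncard_empty]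
  · refine build d s pn P (Q - C (M+1)) hm hdeg hnz hsg hcr (hc _) (hQm _).1 (hQm _).2 (hd' _)
      (-1) ?_ (1,1) (hroots _ (by linarith))
    simp [hQ0]; linarith
end

section
/- For d = 5, every sequence of admissible pairs ((pos_0, neg_0), ..., (pos_4, neg_4)) in which (pos_2, neg_2) = (0,1) or (pos_2, neg_2) = (1,0) is realizable (together with the sign pattern it determines). -/
open Polynomial

/-! ### Integer polynomials as coefficient lists (lowest degree first) -/

namespace RC

noncomputable def toP : List ℤ → ℝ[X]
  | [] => 0
  | c :: l => C (c : ℝ) + X * toP l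

def ladd : List ℤ → List ℤ → List ℤ
  | [], m => m
  | a :: l, [] => a :: l
  | a :: l, b :: m => (a + b) :: ladd l m

def lsmul (a : ℤ) : List ℤ → List ℤ
  | [] => []
  | c :: l => (a * c) :: lsmul a l

def lneg : List ℤ → List ℤ
  | [] => []
  | c :: l => (-c) :: lneg l

def lshift (a : ℤ) : List ℤ → List ℤ
  | [] => []
  | c :: l => ladd (c :: lshift a l) (lsmul a (lshift a l))

def lD : List ℤ → List ℤ
  | [] => []
  | _ :: l => ladd l (0 :: lD l)

def lmir : List ℤ → List ℤ
  | [] => []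
  | c :: l => c :: lneg (lmir l)

def lev (x : ℤ) : List ℤ → ℤ
  | [] => 0
  | c :: l => c + x * lev x l

/-- a lower bound for the values on `[0, h]` -/
def lb (h : ℤ) : List ℤ → ℤ
  | [] => 0
  | c :: l => c + min 0 (h * lb h l)

def noroot (h : ℤ) (l : List ℤ) : Bool := decide (0 < lb h l) || decide (0 < lb h (lneg l))

def count : ℕ → List ℤ → Option ℕ
  | 0, l =>
    if noroot 1 l then some 0
    else if noroot 1 (lD l) && decide (lev 0 l * lev 1 l < 0) then some 1
    else none
  | n + 1, l =>
    if noroot (2 ^ (n + 1)) l then some 0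
    else if noroot (2 ^ (n + 1)) (lD l) && decide (lev 0 l * lev (2 ^ (n + 1)) l < 0) then some 1
    else match count n l with
      | none => none
      | some a => match count n (lshift (2 ^ n) l) with
        | none => none
        | some b => some (a + b)

def allNonneg : List ℤ → Bool
  | [] => true
  | c :: l => decide (0 ≤ c) && allNonneg l

def posInf : List ℤ → Bool
  | [] => false
  | c :: l => decide (0 < c) && allNonneg l

def noInf (l : List ℤ) : Bool := posInf l || posInf (lneg l)

/-- certified root counts -/
def okPos (l : List ℤ) (k : ℕ) : Bool :=
  noInf (lshift (2 ^ 12) l) && decide (count 12 l = some k)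

def ok (l : List ℤ) (pn : ℕ × ℕ) : Bool :=
  decide (lev 0 l ≠ 0) && (okPos l pn.1 && okPos (lmir l) pn.2)

lemma toP_coeff (l : List ℤ) (j : ℕ) : (toP l).coeff j = ((l.getD j 0 : ℤ) : ℝ) := by
  induction l generalizing j with
  | nil => simp [toP]
  | cons c l ih =>
    cases j with
    | zero => rw [toP, coeff_add, coeff_C_zero, mul_coeff_zero, coeff_X_zero]; simp
    | succ j => rw [toP, coeff_add, coeff_C_succ, coeff_X_mul, ih]; simp

lemma toP_ladd (l m : List ℤ) : toP (ladd l m) = toP l + toP m := by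
  induction l generalizing m with
  | nil => simp [ladd, toP]
  | cons a l ih =>
    cases m with
    | nil => simp [ladd, toP]
    | cons b m => simp [ladd, toP, ih]; ring

lemma toP_lsmul (a : ℤ) (l : List ℤ) : toP (lsmul a l) = C (a : ℝ) * toP l := by
  induction l with
  | nil => simp [lsmul, toP]
  | cons b l ih => simp [lsmul, toP, ih]; ring

lemma toP_lneg (l : List ℤ) : toP (lneg l) = - toP l := by
  induction l with
  | nil => simp [lneg, toP]
  | cons b l ih => simp [lneg, toP, ih]; ring

lemma toP_lshift (a : ℤ) (l : List ℤ) : toP (lshift a l) = (toP l).comp (X + C (a : ℝ)) := by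
  induction l with
  | nil => simp [lshift, toP]
  | cons b l ih => simp [lshift, toP, toP_ladd, toP_lsmul, ih]; ring

lemma toP_lD (l : List ℤ) : toP (lD l) = derivative (toP l) := by
  induction l with
  | nil => simp [lD, toP]
  | cons b l ih => simp [lD, toP, toP_ladd, ih]

lemma toP_lmir (l : List ℤ) : toP (lmir l) = (toP l).comp (-X) := by
  induction l with
  | nil => simp [lmir, toP]
  | cons b l ih => simp [lmir, toP, toP_lneg, ih]

lemma lev_eq (x : ℤ) (l : List ℤ) : ((lev x l : ℤ) : ℝ) = (toP l).eval (x : ℝ) := by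
  induction l with
  | nil => simp [lev, toP]
  | cons b l ih => simp [lev, toP, ih]

lemma lb_le (h : ℤ) (l : List ℤ) (y : ℝ) (h0 : 0 ≤ y) (h1 : y ≤ h) :
    ((lb h l : ℤ) : ℝ) ≤ (toP l).eval y := by
  induction l with
  | nil => simp [lb, toP]
  | cons b l ih =>
    simp only [lb, toP, eval_add, eval_C, eval_mul, eval_X]
    push_cast
    have : min 0 ((h : ℝ) * (lb h l : ℝ)) ≤ y * (toP l).eval y := by
      rcases le_total 0 ((lb h l : ℤ) : ℝ) with hp | hp
      · exact (min_le_left _ _).trans (mul_nonneg h0 (hp.trans ih))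
      · refine (min_le_right _ _).trans ?_
        nlinarith
    linarith

lemma noroot_spec {h : ℤ} {l : List ℤ} (H : noroot h l = true) (y : ℝ) (h0 : 0 ≤ y)
    (h1 : y ≤ h) : (toP l).eval y ≠ 0 := by
  simp only [noroot, Bool.or_eq_true, decide_eq_true_eq] at H
  rcases H with H | H
  · have := lb_le h l y h0 h1
    have H' : (0 : ℝ) < (lb h l : ℤ) := by exact_mod_cast H
    exact (H'.trans_le this).ne'
  · have := lb_le h (lneg l) y h0 h1
    have H' : (0 : ℝ) < (lb h (lneg l) : ℤ) := by exact_mod_cast H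
    rw [toP_lneg, eval_neg] at this
    intro h; rw [h] at this; linarith

def Spec (h : ℝ) (l : List ℤ) (k : ℕ) : Prop :=
  {x : ℝ | (0 ≤ x ∧ x < h) ∧ (toP l).eval x = 0}.encard = k ∧
  ∀ x : ℝ, (0 ≤ x ∧ x < h) → (toP l).eval x = 0 → (derivative (toP l)).eval x ≠ 0

lemma spec_zero {h : ℤ} {l : List ℤ} (H : noroot h l = true) : Spec h l 0 := by
  refine ⟨?_, fun x hx hr => absurd hr (noroot_spec H x hx.1 hx.2.le)⟩
  rw [Nat.cast_zero, Set.encard_eq_zero, Set.eq_empty_iff_forall_notMem]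
  rintro x ⟨hx, hr⟩
  exact noroot_spec H x hx.1 hx.2.le hr

lemma spec_one {h : ℤ} (hh : 0 < h) {l : List ℤ}
    (H : (noroot h (lD l) && decide (lev 0 l * lev h l < 0)) = true) : Spec h l 1 := by
  simp only [Bool.and_eq_true, decide_eq_true_eq] at H
  obtain ⟨H1, H2⟩ := H
  have hd : ∀ x : ℝ, 0 ≤ x → x ≤ h → (derivative (toP l)).eval x ≠ 0 := by
    intro x h0 h1
    rw [← toP_lD]; exact noroot_spec H1 x h0 h1
  have hhr : (0 : ℝ) < h := by exact_mod_cast hh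
  have H2' : (toP l).eval 0 * (toP l).eval (h : ℝ) < 0 := by
    have e0 := lev_eq 0 l
    have e1 := lev_eq h l
    rw [Int.cast_zero] at e0
    rw [← e0, ← e1]; exact_mod_cast H2
  refine ⟨?_, fun x hx _ => hd x hx.1 hx.2.le⟩
  have hc : ContinuousOn (fun x => (toP l).eval x) (Set.Icc 0 (h : ℝ)) :=
    (toP l).continuous.continuousOn
  obtain ⟨r, ⟨hr0, hr1⟩, hr⟩ : ∃ r ∈ Set.Icc 0 (h : ℝ), (toP l).eval r = 0 := by
    rcases mul_neg_iff.mp H2' with ⟨a, b⟩ | ⟨a, b⟩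
    · exact intermediate_value_Icc' hhr.le hc ⟨b.le, a.le⟩
    · exact intermediate_value_Icc hhr.le hc ⟨a.le, b.le⟩
  have hrh : r < h := by
    rcases hr1.lt_or_eq with h | h
    · exact h
    · rw [← h, hr] at H2'; simp at H2'
  have key : ∀ x y : ℝ, 0 ≤ x → x < y → y ≤ h → (toP l).eval x = 0 →
      (toP l).eval y = 0 → False := by
    intro x y h0 hxy h1 hx hy
    obtain ⟨c, hc, hc'⟩ := exists_hasDerivAt_eq_zero (f := fun x => (toP l).eval x)
      (f' := fun x => (derivative (toP l)).eval x) hxy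
      (toP l).continuous.continuousOn (by simp [hx, hy]) (fun x _ => (toP l).hasDerivAt x)
    exact hd c (h0.trans hc.1.le) (hc.2.le.trans h1) hc'
  rw [Nat.cast_one, Set.encard_eq_one]
  refine ⟨r, ?_⟩
  ext x
  simp only [Set.mem_ofPred_eq, Set.mem_singleton_iff]
  constructor
  · rintro ⟨⟨h0, h1⟩, hx⟩
    rcases lt_trichotomy x r with h | h | h
    · exact (key x r h0 h hr1 hx hr).elim
    · exact h
    · exact (key r x hr0 h h1.le hr hx).elim
  · rintro rfl; exact ⟨⟨hr0, hrh⟩, hr⟩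

lemma spec_add {h : ℤ} (hh : 0 < h) {l : List ℤ} {a b : ℕ} (ha : Spec h l a)
    (hb : Spec h (lshift h l) b) : Spec (2 * h) l (a + b) := by
  have hhr : (0 : ℝ) < h := by exact_mod_cast hh
  obtain ⟨ha1, ha2⟩ := ha
  obtain ⟨hb1, hb2⟩ := hb
  have hs : ∀ x : ℝ, (toP (lshift h l)).eval x = (toP l).eval (x + h) := by
    intro x; rw [toP_lshift]; simp
  have hs' : ∀ x : ℝ, (derivative (toP (lshift h l))).eval x
      = (derivative (toP l)).eval (x + h) := by
    intro x; rw [toP_lshift, derivative_comp]; simp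
  constructor
  · have : {x : ℝ | (0 ≤ x ∧ x < 2 * h) ∧ (toP l).eval x = 0} =
        {x : ℝ | (0 ≤ x ∧ x < h) ∧ (toP l).eval x = 0} ∪
        (fun x : ℝ => x + h) '' {x : ℝ | (0 ≤ x ∧ x < h) ∧ (toP (lshift h l)).eval x = 0} := by
      ext x
      simp only [Set.mem_ofPred_eq, Set.mem_union, Set.mem_image]
      constructor
      · rintro ⟨⟨h0, h1⟩, hx⟩
        rcases lt_or_ge x h with hlt | hge
        · exact Or.inl ⟨⟨h0, hlt⟩, hx⟩
        · refine Or.inr ⟨x - h, ⟨⟨by linarith, by linarith⟩, ?_⟩, by ring⟩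
          rw [hs]; simpa using hx
      · rintro (⟨⟨h0, h1⟩, hx⟩ | ⟨y, ⟨⟨h0, h1⟩, hy⟩, rfl⟩)
        · exact ⟨⟨h0, by linarith⟩, hx⟩
        · exact ⟨⟨by linarith, by linarith⟩, by rw [← hs]; exact hy⟩
    rw [this, Set.encard_union_eq, ha1, Function.Injective.encard_image, hb1, Nat.cast_add]
    · intro x y hxy; simpa using hxy
    · rw [Set.disjoint_left]
      rintro x ⟨⟨_, h1⟩, _⟩ ⟨y, ⟨⟨h0, _⟩, _⟩, hy⟩
      simp only at hy
      linarith
  · intro x hx hr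
    rcases lt_or_ge x h with hlt | hge
    · exact ha2 x ⟨hx.1, hlt⟩ hr
    · have := hb2 (x - h) ⟨by linarith, by linarith [hx.2]⟩ (by rw [hs]; simpa using hr)
      rw [hs'] at this
      simpa using this

lemma count_spec (n : ℕ) (l : List ℤ) (k : ℕ) (H : count n l = some k) :
    Spec ((2 ^ n : ℤ) : ℝ) l k := by
  induction n generalizing l k with
  | zero =>
    rw [count] at H
    split_ifs at H with h1 h2
    · cases H; exact spec_zero (h := 2 ^ 0) h1
    · cases H; exact spec_one (h := 2 ^ 0) (by norm_num) h2
  | succ n ih =>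
    rw [count] at H
    split_ifs at H with h1 h2
    · cases H; exact spec_zero h1
    · cases H; exact spec_one (by positivity) h2
    · split at H
      · cases H
      · rename_i a ha
        split at H
        · cases H
        · rename_i b hb
          cases H
          have := spec_add (by positivity) (ih _ _ ha) (ih _ _ hb)
          convert this using 1
          push_cast; ring

lemma allNonneg_spec (l : List ℤ) (H : allNonneg l = true) (x : ℝ) (hx : 0 ≤ x) :
    0 ≤ (toP l).eval x := by
  induction l with
  | nil => simp [toP]
  | cons c l ih =>
    simp only [allNonneg, Bool.and_eq_true, decide_eq_true_eq] at H
    simp only [toP, eval_add, eval_C, eval_mul, eval_X]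
    have h1 : (0 : ℝ) ≤ c := by exact_mod_cast H.1
    have := mul_nonneg hx (ih H.2)
    linarith

lemma posInf_spec (l : List ℤ) (H : posInf l = true) (x : ℝ) (hx : 0 ≤ x) :
    0 < (toP l).eval x := by
  cases l with
  | nil => simp [posInf] at H
  | cons c l =>
    simp only [posInf, Bool.and_eq_true, decide_eq_true_eq] at H
    simp only [toP, eval_add, eval_C, eval_mul, eval_X]
    have h1 : (0 : ℝ) < c := by exact_mod_cast H.1
    have := mul_nonneg hx (allNonneg_spec l H.2 x hx)
    linarith

lemma noInf_spec (l : List ℤ) (H : noInf l = true) (x : ℝ) (hx : 0 ≤ x) :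
    (toP l).eval x ≠ 0 := by
  simp only [noInf, Bool.or_eq_true] at H
  rcases H with H | H
  · exact (posInf_spec l H x hx).ne'
  · have := posInf_spec _ H x hx
    rw [toP_lneg, eval_neg] at this
    intro h; rw [h] at this; simp at this

lemma okPos_spec {l : List ℤ} {k : ℕ} (H : okPos l k = true) (h0 : (toP l).eval 0 ≠ 0) :
    {x : ℝ | 0 < x ∧ (toP l).eval x = 0}.ncard = k ∧
    ∀ x : ℝ, 0 < x → (toP l).eval x = 0 → (derivative (toP l)).eval x ≠ 0 := by
  simp only [okPos, Bool.and_eq_true, decide_eq_true_eq] at H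
  obtain ⟨H1, H2⟩ := H
  obtain ⟨H3, H4⟩ := count_spec _ _ _ H2
  have hb : ∀ x : ℝ, (toP l).eval x = 0 → x < ((2 ^ 12 : ℤ) : ℝ) := by
    intro x hx
    by_contra hge
    push Not at hge
    have := noInf_spec _ H1 (x - ((2 ^ 12 : ℤ) : ℝ)) (by linarith)
    rw [toP_lshift] at this
    apply this
    rw [eval_comp, eval_add, eval_X, eval_C, sub_add_cancel]
    exact hx
  constructor
  · have : {x : ℝ | 0 < x ∧ (toP l).eval x = 0} =
        {x : ℝ | (0 ≤ x ∧ x < ((2 ^ 12 : ℤ) : ℝ)) ∧ (toP l).eval x = 0} := by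
      ext x
      simp only [Set.mem_ofPred_eq]
      constructor
      · rintro ⟨h, hx⟩; exact ⟨⟨h.le, hb x hx⟩, hx⟩
      · rintro ⟨⟨h, _⟩, hx⟩
        refine ⟨lt_of_le_of_ne h ?_, hx⟩
        rintro rfl; exact h0 hx
    rw [this, Set.ncard, H3]; rfl
  · intro x hx hr
    exact H4 x ⟨hx.le, hb x hr⟩ hr

lemma ok_spec {l : List ℤ} {pn : ℕ × ℕ} (H : ok l pn = true) :
    CountRoots (toP l) pn.1 pn.2 := by
  simp only [ok, Bool.and_eq_true, decide_eq_true_eq] at H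
  obtain ⟨h0, H1, H2⟩ := H
  have h0' : (toP l).eval 0 ≠ 0 := by
    have e0 := lev_eq 0 l
    rw [Int.cast_zero] at e0
    rw [← e0]; exact_mod_cast h0
  have hm : ∀ x : ℝ, (toP (lmir l)).eval x = (toP l).eval (-x) := by
    intro x; rw [toP_lmir]; simp
  have hm' : ∀ x : ℝ, (derivative (toP (lmir l))).eval x = -(derivative (toP l)).eval (-x) := by
    intro x; rw [toP_lmir, derivative_comp]; simp
  obtain ⟨a1, a2⟩ := okPos_spec H1 h0'
  obtain ⟨b1, b2⟩ := okPos_spec H2 (by rw [hm]; simpa using h0')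
  refine ⟨a1, ?_, ?_⟩
  · rw [← b1]
    have : {x : ℝ | x < 0 ∧ (toP l).eval x = 0} =
        (fun x : ℝ => -x) '' {x : ℝ | 0 < x ∧ (toP (lmir l)).eval x = 0} := by
      ext x
      simp only [Set.mem_ofPred_eq, Set.mem_image, hm]
      constructor
      · rintro ⟨h, hx⟩; exact ⟨-x, ⟨by linarith, by simpa using hx⟩, by simp⟩
      · rintro ⟨y, ⟨h, hy⟩, rfl⟩; exact ⟨by linarith, hy⟩
    rw [this, Set.ncard_image_of_injective _ neg_injective]
  · intro x hx
    rcases lt_trichotomy x 0 with h | h | h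
    · have := b2 (-x) (by linarith) (by rw [hm]; simpa using hx)
      rw [hm'] at this
      simpa using this
    · subst h; exact absurd hx h0'
    · exact a2 x h hx

/-! ### The table of realizing polynomials -/

def table0 : List (List (ℕ × ℕ) × List ℤ) := [
  ([(0, 3), (0, 2), (0, 1), (0, 2), (0, 1)], [655, 575, 65, 15, 9, 1]),
  ([(0, 3), (0, 2), (0, 1), (0, 0), (0, 1)], [3716, 3861, 885, 103, 15, 1]),
  ([(0, 1), (0, 2), (0, 1), (0, 2), (0, 1)], [121, 32, 33, 7, 6, 1]),
  ([(0, 1), (0, 2), (0, 1), (0, 0), (0, 1)], [724, 60, 170, 56, 9, 1]),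
  ([(0, 1), (0, 0), (0, 1), (0, 2), (0, 1)], [133, 665, 63, 5, 6, 1]),
  ([(0, 1), (0, 0), (0, 1), (0, 0), (0, 1)], [12748, 1863, 750, 197, 18, 1]),
  ([(1, 2), (0, 2), (0, 1), (0, 2), (0, 1)], [-197, 44, 30, 7, 6, 1]),
  ([(1, 2), (0, 2), (0, 1), (0, 0), (0, 1)], [-152, 115, 155, 49, 9, 1]),
  ([(1, 0), (0, 2), (0, 1), (0, 2), (0, 1)], [-993, 1511, 119, 29, 12, 1]),
  ([(1, 0), (0, 2), (0, 1), (0, 0), (0, 1)], [-1126, 123, 174, 43, 9, 1]),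
  ([(1, 0), (0, 0), (0, 1), (0, 2), (0, 1)], [-3509, 2825, 82, 26, 12, 1]),
  ([(1, 0), (0, 0), (0, 1), (0, 0), (0, 1)], [-35, 181, 20, 34, 7, 1]),
  ([(2, 1), (1, 1), (0, 1), (0, 2), (0, 1)], [138, -276, 33, 9, 7, 1]),
  ([(2, 1), (1, 1), (0, 1), (0, 0), (0, 1)], [3595, -5184, 1058, 154, 18, 1]),
  ([(0, 1), (1, 1), (0, 1), (0, 2), (0, 1)], [60, -17, 29, 7, 6, 1]),
  ([(0, 1), (1, 1), (0, 1), (0, 0), (0, 1)], [70, -35, 60, 32, 7, 1]),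
  ([(1, 2), (1, 1), (0, 1), (0, 2), (0, 1)], [-274, -93, 23, 7, 6, 1]),
  ([(1, 2), (1, 1), (0, 1), (0, 0), (0, 1)], [-49, -181, 32, 33, 7, 1]),
  ([(1, 0), (1, 1), (0, 1), (0, 2), (0, 1)], [-66409, -435, 391, 80, 18, 1]),
  ([(1, 0), (1, 1), (0, 1), (0, 0), (0, 1)], [-6432, -1885, 166, 111, 15, 1]),
  ([(2, 1), (2, 0), (1, 0), (0, 2), (0, 1)], [266, 175, -273, 18, 9, 1]),
  ([(2, 1), (2, 0), (1, 0), (0, 0), (0, 1)], [590, 298, -808, 122, 15, 1]),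
  ([(0, 1), (2, 0), (1, 0), (0, 2), (0, 1)], [266, 156, -200, 21, 9, 1]),
  ([(0, 1), (2, 0), (1, 0), (0, 0), (0, 1)], [3828, 691, -736, 109, 15, 1]),
  ([(0, 1), (0, 0), (1, 0), (0, 2), (0, 1)], [45, 155, -58, 7, 6, 1]),
  ([(0, 1), (0, 0), (1, 0), (0, 0), (0, 1)], [406, 444, -194, 96, 12, 1]),
  ([(3, 0), (2, 0), (1, 0), (0, 2), (0, 1)], [-1418, 3166, -1127, 18, 15, 1]),
  ([(3, 0), (2, 0), (1, 0), (0, 0), (0, 1)], [-3232, 9413, -4032, 227, 23, 1]),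
  ([(1, 0), (2, 0), (1, 0), (0, 2), (0, 1)], [-344, 89, -174, 7, 7, 1]),
  ([(1, 0), (2, 0), (1, 0), (0, 0), (0, 1)], [-1485, 523, -469, 68, 12, 1]),
  ([(1, 0), (0, 0), (1, 0), (0, 2), (0, 1)], [-367, 114, -56, 14, 7, 1]),
  ([(1, 0), (0, 0), (1, 0), (0, 0), (0, 1)], [-739, 433, -196, 58, 9, 1]),
  ([(2, 1), (1, 1), (1, 0), (0, 2), (0, 1)], [678, -435, -123, 19, 9, 1]),
  ([(2, 1), (1, 1), (1, 0), (0, 0), (0, 1)], [2677, -1126, -548, 143, 15, 1]),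
  ([(0, 1), (1, 1), (1, 0), (0, 2), (0, 1)], [199, -53, -51, 12, 7, 1]),
  ([(0, 1), (1, 1), (1, 0), (0, 0), (0, 1)], [520, -128, -38, 41, 7, 1]),
  ([(1, 2), (1, 1), (1, 0), (0, 2), (0, 1)], [-38, -109, -39, 6, 6, 1]),
  ([(1, 2), (1, 1), (1, 0), (0, 0), (0, 1)], [-856, -1010, -41, 44, 9, 1]),
  ([(1, 0), (1, 1), (1, 0), (0, 2), (0, 1)], [-2288, -1890, -492, 95, 18, 1]),
  ([(1, 0), (1, 1), (1, 0), (0, 0), (0, 1)], [-197, -40, -104, 48, 7, 1]),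
  ([(0, 3), (0, 2), (0, 1), (1, 1), (0, 1)], [111, 201, 38, -9, 5, 1]),
  ([(0, 1), (0, 2), (0, 1), (1, 1), (0, 1)], [1615, 2057, 61, -20, 7, 1]),
  ([(0, 1), (0, 0), (0, 1), (1, 1), (0, 1)], [434, 1660, 63, -4, 7, 1]),
  ([(1, 2), (0, 2), (0, 1), (1, 1), (0, 1)], [-668, 501, 43, -14, 7, 1]),
  ([(1, 0), (0, 2), (0, 1), (1, 1), (0, 1)], [-1776, 5203, 47, -14, 12, 1]),
  ([(1, 0), (0, 0), (0, 1), (1, 1), (0, 1)], [-103, 904, 30, -6, 6, 1]),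
  ([(2, 1), (1, 1), (0, 1), (1, 1), (0, 1)], [73, -265, 39, -11, 7, 1]),
  ([(0, 1), (1, 1), (0, 1), (1, 1), (0, 1)], [10202, -1805, 390, -118, 23, 1]),
  ([(1, 2), (1, 1), (0, 1), (1, 1), (0, 1)], [-413, -20, 14, -4, 5, 1]),
  ([(1, 0), (1, 1), (0, 1), (1, 1), (0, 1)], [-267950, -969, 83, -17, 18, 1]),
  ([(2, 1), (2, 0), (1, 0), (1, 1), (0, 1)], [268, 96, -223, -6, 7, 1]),
  ([(0, 1), (2, 0), (1, 0), (1, 1), (0, 1)], [1354, 1522, -474, -11, 9, 1]),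
  ([(0, 1), (0, 0), (1, 0), (1, 1), (0, 1)], [437, 1555, -371, -5, 9, 1]),
  ([(3, 0), (2, 0), (1, 0), (1, 1), (0, 1)], [-544, 1209, -441, -11, 9, 1]),
  ([(1, 0), (2, 0), (1, 0), (1, 1), (0, 1)], [-284, 1049, -338, -14, 7, 1]),
  ([(1, 0), (0, 0), (1, 0), (1, 1), (0, 1)], [-3180, 7159, -1299, -7, 15, 1]),
  ([(2, 1), (1, 1), (1, 0), (1, 1), (0, 1)], [296, -41, -84, -4, 5, 1]),
  ([(0, 1), (1, 1), (1, 0), (1, 1), (0, 1)], [547886, -3060, -7881, -27, 23, 1]),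
  ([(1, 2), (1, 1), (1, 0), (1, 1), (0, 1)], [-3981, -12925, -5271, -35, 23, 1]),
  ([(1, 0), (1, 1), (1, 0), (1, 1), (0, 1)], [-118, -100, -412, -9, 9, 1])]

def mirEntry (e : List (ℕ × ℕ) × List ℤ) : List (ℕ × ℕ) × List ℤ :=
  (e.1.map Prod.swap, lneg (lmir e.2))

def table : List (List (ℕ × ℕ) × List ℤ) := table0 ++ table0.map mirEntry

def goodEntry : List (ℕ × ℕ) × List ℤ → Bool
  | ([x0, x1, x2, x3, x4], [c0, c1, c2, c3, c4, c5]) =>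
    decide (c5 = 1) &&
    (decide (0 < (-1) ^ x0.1 * c0) && (decide (0 < (-1) ^ x1.1 * c1) &&
    (decide (0 < (-1) ^ x2.1 * c2) && (decide (0 < (-1) ^ x3.1 * c3) &&
    (decide (0 < (-1) ^ x4.1 * c4) &&
    (ok [c0, c1, c2, c3, c4, c5] x0 && (ok (lD [c0, c1, c2, c3, c4, c5]) x1 &&
    (ok (lD (lD [c0, c1, c2, c3, c4, c5])) x2 &&
    (ok (lD (lD (lD [c0, c1, c2, c3, c4, c5]))) x3 &&
    ok (lD (lD (lD (lD [c0, c1, c2, c3, c4, c5])))) x4)))))))))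
  | _ => false

lemma table_good : table.all goodEntry = true := by decide +kernel

/-! ### Enumeration of the SAPs -/

def pat (a b c d e : ℤ) : ℕ → ℤ
  | 0 => 1
  | 1 => a
  | 2 => b
  | 3 => c
  | 4 => d
  | 5 => e
  | _ => 0

abbrev C1 (s : ℕ → ℤ) (k : ℕ) (x : ℕ × ℕ) : Prop :=
  x.1 ≤ signChanges s (5 - k) ∧
    Even ((signChanges s (5 - k) : ℤ) - x.1) ∧
    x.2 ≤ signPres s (5 - k) ∧
    Even ((signPres s (5 - k) : ℤ) - x.2) ∧
    s (5 - k) = (-1) ^ x.1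

abbrev C2 (x y : ℕ × ℕ) : Prop :=
  x.1 ≤ y.1 + 1 ∧ x.2 ≤ y.2 + 1 ∧ x.1 + x.2 ≤ y.1 + y.2 + 1 ∧
    Even ((y.1 : ℤ) + y.2 + 3 - x.1 - x.2)

def pairs (n : ℕ) : List (ℕ × ℕ) := (List.range n).product (List.range n)

def pm : List ℤ := [1, -1]

def C1b (s : ℕ → ℤ) (k : ℕ) (x : ℕ × ℕ) : Bool := decide (C1 s k x)

def C2b (x y : ℕ × ℕ) : Bool := decide (C2 x y)

set_option synthInstance.maxHeartbeats 200000 in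
set_option synthInstance.maxSize 2000 in
lemma enum : ∀ a ∈ pm, ∀ b ∈ pm, ∀ c ∈ pm, ∀ d ∈ pm, ∀ e ∈ pm,
    ∀ x4 ∈ pairs 2, C1b (pat a b c d e) 4 x4 = true →
    ∀ x3 ∈ pairs 3, C2b x3 x4 = true → C1b (pat a b c d e) 3 x3 = true →
    ∀ x2 ∈ [(0, 1), (1, 0)], C2b x2 x3 = true → C1b (pat a b c d e) 2 x2 = true →
    ∀ x1 ∈ pairs 5, C2b x1 x2 = true → C1b (pat a b c d e) 1 x1 = true →
    ∀ x0 ∈ pairs 6, C2b x0 x1 = true → C1b (pat a b c d e) 0 x0 = true →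
    [x0, x1, x2, x3, x4] ∈ table.map Prod.fst := by decide +kernel

lemma signChanges_congr {s t : ℕ → ℤ} {n : ℕ} (h : ∀ i ≤ n, s i = t i) :
    signChanges s n = signChanges t n := by
  unfold signChanges
  congr 1
  apply Finset.filter_congr
  intro i hi
  rw [Finset.mem_range] at hi
  rw [h i (by omega), h (i + 1) (by omega)]

lemma signPres_congr {s t : ℕ → ℤ} {n : ℕ} (h : ∀ i ≤ n, s i = t i) :
    signPres s n = signPres t n := by
  unfold signPres
  congr 1
  apply Finset.filter_congr
  intro i hi
  rw [Finset.mem_range] at hi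
  rw [h i (by omega), h (i + 1) (by omega)]

lemma signChanges_le (s : ℕ → ℤ) (n : ℕ) : signChanges s n ≤ n := by
  unfold signChanges
  exact (Finset.card_filter_le _ _).trans (by simp)

lemma signPres_le (s : ℕ → ℤ) (n : ℕ) : signPres s n ≤ n := by
  unfold signPres
  exact (Finset.card_filter_le _ _).trans (by simp)

lemma mem_pairs {x : ℕ × ℕ} {n : ℕ} (h1 : x.1 < n) (h2 : x.2 < n) : x ∈ pairs n := by
  unfold pairs
  obtain ⟨a, b⟩ := x
  exact List.mem_product.mpr ⟨List.mem_range.mpr h1, List.mem_range.mpr h2⟩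

lemma exists_entry (s : ℕ → ℤ) (hs : IsSignPattern 5 s) (pn : ℕ → ℕ × ℕ)
    (hpn : IsSAP 5 s pn) (h2 : pn 2 = (0, 1) ∨ pn 2 = (1, 0)) :
    ∃ l, ([pn 0, pn 1, pn 2, pn 3, pn 4], l) ∈ table := by
  obtain ⟨hs0, hs1⟩ := hs
  obtain ⟨H1, H2⟩ := hpn
  have hpat : ∀ i ≤ 5, s i = pat (s 1) (s 2) (s 3) (s 4) (s 5) i := by
    intro i hi
    interval_cases i <;> simp [pat, hs0]
  have hpm : ∀ i ≤ 5, s i ∈ pm := by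
    intro i hi
    rcases hs1 i hi with h | h <;> simp [pm, h]
  have hC1 : ∀ k < 5, C1 (pat (s 1) (s 2) (s 3) (s 4) (s 5)) k (pn k) := by
    intro k hk
    have := H1 k hk
    rw [signChanges_congr (t := pat (s 1) (s 2) (s 3) (s 4) (s 5))
      (fun i hi => hpat i (by omega)), signPres_congr (t := pat (s 1) (s 2) (s 3) (s 4) (s 5))
      (fun i hi => hpat i (by omega)), hpat (5 - k) (by omega)] at this
    exact this
  have hmem : ∀ k < 5, pn k ∈ pairs (6 - k) := by
    intro k hk
    have h := H1 k hk
    have a := signChanges_le s (5 - k)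
    have b := signPres_le s (5 - k)
    exact mem_pairs (by omega) (by omega)
  have := enum _ (hpm 1 (by norm_num)) _ (hpm 2 (by norm_num)) _ (hpm 3 (by norm_num))
    _ (hpm 4 (by norm_num)) _ (hpm 5 (by norm_num))
    (pn 4) (hmem 4 (by norm_num)) (decide_eq_true (hC1 4 (by norm_num)))
    (pn 3) (hmem 3 (by norm_num)) (decide_eq_true (H2 3 (by norm_num))) (decide_eq_true (hC1 3 (by norm_num)))
    (pn 2) (by simpa using h2) (decide_eq_true (H2 2 (by norm_num))) (decide_eq_true (hC1 2 (by norm_num)))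
    (pn 1) (hmem 1 (by norm_num)) (decide_eq_true (H2 1 (by norm_num))) (decide_eq_true (hC1 1 (by norm_num)))
    (pn 0) (hmem 0 (by norm_num)) (decide_eq_true (H2 0 (by norm_num))) (decide_eq_true (hC1 0 (by norm_num)))
  rw [List.mem_map] at this
  obtain ⟨⟨p, l⟩, hm, he⟩ := this
  exact ⟨l, by rw [← he]; exact hm⟩

lemma realize (s : ℕ → ℤ) (hs : s 0 = 1) (pn : ℕ → ℕ × ℕ)
    (hpn : ∀ k < 5, s (5 - k) = (-1) ^ (pn k).1) (l : List ℤ)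
    (hl : goodEntry ([pn 0, pn 1, pn 2, pn 3, pn 4], l) = true) : Realizable 5 s pn := by
  unfold goodEntry at hl
  split at hl
  swap
  · cases hl
  rename_i e x0 x1 x2 x3 x4 c0 c1 c2 c3 c4 c5 he
  simp only [Prod.mk.injEq, List.cons.injEq, and_true] at he
  obtain ⟨⟨rfl, rfl, rfl, rfl, rfl⟩, rfl⟩ := he
  simp only [Bool.and_eq_true, decide_eq_true_eq] at hl
  obtain ⟨rfl, g0, g1, g2, g3, g4, k0, k1, k2, k3, k4⟩ := hl
  have hP : toP [c0, c1, c2, c3, c4, 1] = X ^ 5 + C (c4 : ℝ) * X ^ 4 + C (c3 : ℝ) * X ^ 3 +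
      C (c2 : ℝ) * X ^ 2 + C (c1 : ℝ) * X + C (c0 : ℝ) := by
    simp [toP]; ring
  have hdeg : (toP [c0, c1, c2, c3, c4, 1]).natDegree = 5 := by
    rw [hP]; compute_degree!
  have e0 : (toP [c0, c1, c2, c3, c4, 1]).coeff 0 = c0 := by simp [toP_coeff]
  have e1 : (toP [c0, c1, c2, c3, c4, 1]).coeff 1 = c1 := by simp [toP_coeff]
  have e2 : (toP [c0, c1, c2, c3, c4, 1]).coeff 2 = c2 := by simp [toP_coeff]
  have e3 : (toP [c0, c1, c2, c3, c4, 1]).coeff 3 = c3 := by simp [toP_coeff]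
  have e4 : (toP [c0, c1, c2, c3, c4, 1]).coeff 4 = c4 := by simp [toP_coeff]
  have e5 : (toP [c0, c1, c2, c3, c4, 1]).coeff 5 = 1 := by simp [toP_coeff]
  have hsg : ∀ i ≤ 5, 0 < (s i : ℝ) * (toP [c0, c1, c2, c3, c4, 1]).coeff (5 - i) := by
    intro i hi
    interval_cases i
    · simp [hs, e5]
    · have := hpn 4 (by norm_num)
      norm_num at this ⊢
      rw [e4, this]; exact_mod_cast g4
    · have := hpn 3 (by norm_num)
      norm_num at this ⊢
      rw [e3, this]; exact_mod_cast g3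
    · have := hpn 2 (by norm_num)
      norm_num at this ⊢
      rw [e2, this]; exact_mod_cast g2
    · have := hpn 1 (by norm_num)
      norm_num at this ⊢
      rw [e1, this]; exact_mod_cast g1
    · have := hpn 0 (by norm_num)
      norm_num at this ⊢
      rw [e0, this]; exact_mod_cast g0
  refine ⟨toP [c0, c1, c2, c3, c4, 1], ?_, hdeg, ?_, hsg, ?_⟩
  · rw [Monic, leadingCoeff, hdeg, e5]
  · intro j hj h
    have := hsg (5 - j) (by omega)
    rw [show 5 - (5 - j) = j by omega, h] at this
    simp at this
  · intro k hk
    interval_cases k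
    · exact ok_spec k0
    · have := ok_spec k1
      simp only [toP_lD] at this; exact this
    · have := ok_spec k2
      simp only [toP_lD] at this; exact this
    · have := ok_spec k3
      simp only [toP_lD] at this; exact this
    · have := ok_spec k4
      simp only [toP_lD] at this; exact this

end RC

/-- For `d = 5`, every SAP with `(pos_2, neg_2) = (0,1)` or `(1,0)` is realizable
(with the sign pattern it determines). -/
theorem stmt3 (s : ℕ → ℤ) (hs : IsSignPattern 5 s) (pn : ℕ → ℕ × ℕ)
    (hpn : IsSAP 5 s pn) (h2 : pn 2 = (0, 1) ∨ pn 2 = (1, 0)) :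
    Realizable 5 s pn := by
  obtain ⟨l, hl⟩ := RC.exists_entry s hs pn hpn h2
  exact RC.realize s hs.1 pn (fun k hk => (hpn.1 k hk).2.2.2.2) l
    (List.all_eq_true.mp RC.table_good _ hl)
end

section
/- For each d ∈ {1, 2, 3}, every couple (σ, SAP), where σ is a sign pattern of length d+1 and the SAP is a sequence of admissible pairs for σ, is realizable. -/
open Polynomial

set_option linter.unusedSimpArgs false

/-- Explicit finite-set certificate for root counts. -/
def CR (f f' : ℝ → ℝ) (p n : ℕ) : Prop :=
  ∃ R : Finset ℝ, (R.filter (fun x => 0 < x)).card = p ∧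
    (R.filter (fun x => x < 0)).card = n ∧ (∀ x, f x = 0 ↔ x ∈ R) ∧ ∀ x ∈ R, f' x ≠ 0

lemma CR.count {P : Polynomial ℝ} {f f' : ℝ → ℝ} {p n : ℕ} (h : CR f f' p n)
    (hf : ∀ x, P.eval x = f x) (hf' : ∀ x, (derivative P).eval x = f' x) :
    CountRoots P p n := by
  obtain ⟨R, h1, h2, h3, h4⟩ := h
  refine ⟨?_, ?_, ?_⟩
  · rw [← h1, ← Set.ncard_coe_finset]
    congr 1
    ext x
    simp [hf, h3, and_comm]
  · rw [← h2, ← Set.ncard_coe_finset]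
    congr 1
    ext x
    simp [hf, h3, and_comm]
  · intro x hx
    rw [hf']
    rw [hf] at hx
    exact h4 x ((h3 x).1 hx)

lemma CR.lin_neg {m a : ℝ} (hm : 0 < m := by norm_num) (ha : 0 < a := by norm_num) :
    CR (fun x => m * x + a) (fun _ => m) 0 1 := by
  have : -a / m < 0 := div_neg_of_neg_of_pos (by linarith) hm
  refine ⟨{-a / m}, ?_, ?_, ?_, ?_⟩
  · simp [Finset.filter_singleton, not_lt.2 this.le]
  · simp [Finset.filter_singleton, this]
  · intro x
    simp only [Finset.mem_singleton]
    rw [eq_div_iff hm.ne']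
    constructor <;> intro h <;> linarith
  · intro x _
    exact hm.ne'

lemma CR.lin_pos {m a : ℝ} (hm : 0 < m := by norm_num) (ha : a < 0 := by norm_num) :
    CR (fun x => m * x + a) (fun _ => m) 1 0 := by
  have : 0 < -a / m := div_pos (by linarith) hm
  refine ⟨{-a / m}, ?_, ?_, ?_, ?_⟩
  · simp [Finset.filter_singleton, this]
  · simp [Finset.filter_singleton, not_lt.2 this.le]
  · intro x
    simp only [Finset.mem_singleton]
    rw [eq_div_iff hm.ne']
    constructor <;> intro h <;> linarith
  · intro x _
    exact hm.ne'

lemma CR.none {f f' : ℝ → ℝ} (h : ∀ x, 0 < f x) : CR f f' 0 0 :=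
  ⟨∅, by simp, by simp, fun x => by simp [(h x).ne'], by simp⟩

lemma CR.one {f f' : ℝ → ℝ} {p n : ℕ} (r u v : ℝ)
    (hf : ∀ x, f x = (x - r) * (x ^ 2 + u * x + v) := by intro x; ring) (hd : u ^ 2 < 4 * v := by norm_num)
    (hp : (({r} : Finset ℝ).filter (fun x => 0 < x)).card = p := by norm_num [Finset.filter_insert, Finset.filter_singleton])
    (hn : (({r} : Finset ℝ).filter (fun x => x < 0)).card = n := by norm_num [Finset.filter_insert, Finset.filter_singleton])
    (h' : f' r ≠ 0 := by norm_num) : CR f f' p n := by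
  refine ⟨{r}, hp, hn, ?_, by simpa using h'⟩
  intro x
  have : 0 < x ^ 2 + u * x + v := by nlinarith [sq_nonneg (2 * x + u)]
  rw [hf, mul_eq_zero, or_iff_left this.ne', sub_eq_zero, Finset.mem_singleton]

lemma CR.two {f f' : ℝ → ℝ} {p n : ℕ} (m r t : ℝ) (hm : m ≠ 0 := by norm_num)
    (hf : ∀ x, f x = m * ((x - r) * (x - t)) := by intro x; ring)
    (hp : (({r, t} : Finset ℝ).filter (fun x => 0 < x)).card = p := by norm_num [Finset.filter_insert, Finset.filter_singleton])
    (hn : (({r, t} : Finset ℝ).filter (fun x => x < 0)).card = n := by norm_num [Finset.filter_insert, Finset.filter_singleton])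
    (h' : f' r ≠ 0 := by norm_num) (h'' : f' t ≠ 0 := by norm_num) : CR f f' p n := by
  refine ⟨{r, t}, hp, hn, ?_, by simp [h', h'']⟩
  intro x
  simp [hf, hm, sub_eq_zero]

lemma CR.three {f f' : ℝ → ℝ} {p n : ℕ} (r t w : ℝ)
    (hf : ∀ x, f x = (x - r) * ((x - t) * (x - w)) := by intro x; ring)
    (hp : (({r, t, w} : Finset ℝ).filter (fun x => 0 < x)).card = p := by norm_num [Finset.filter_insert, Finset.filter_singleton])
    (hn : (({r, t, w} : Finset ℝ).filter (fun x => x < 0)).card = n := by norm_num [Finset.filter_insert, Finset.filter_singleton])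
    (h1 : f' r ≠ 0 := by norm_num) (h2 : f' t ≠ 0 := by norm_num) (h3 : f' w ≠ 0 := by norm_num) : CR f f' p n := by
  refine ⟨{r, t, w}, hp, hn, ?_, by simp [h1, h2, h3]⟩
  intro x
  simp [hf, sub_eq_zero]

lemma real_one {s : ℕ → ℤ} {pn : ℕ → ℕ × ℕ} (a : ℝ)
    (h0 : s 0 = 1) (h1 : 0 < (s 1 : ℝ) * a)
    (c0 : CR (fun x => 1 * x + a) (fun _ => 1) (pn 0).1 (pn 0).2) :
    Realizable 1 s pn := by
  have k0 : (X + C a : ℝ[X]).coeff 0 = a := by simp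
  have k1 : (X + C a : ℝ[X]).coeff 1 = 1 := by simp [coeff_C]
  have ha : a ≠ 0 := by rintro rfl; simp at h1
  refine ⟨X + C a, monic_X_add_C a, natDegree_X_add_C a, ?_, ?_, ?_⟩
  · intro j hj
    interval_cases j
    · rw [k0]; exact ha
    · rw [k1]; exact one_ne_zero
  · intro i hi
    interval_cases i
    · rw [h0]; norm_num [k1]
    · simpa [k0] using h1
  · intro k hk
    interval_cases k
    exact c0.count (by simp [iterDeriv]) (by simp [iterDeriv])

lemma real_two {s : ℕ → ℤ} {pn : ℕ → ℕ × ℕ} (a b : ℝ)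
    (h0 : s 0 = 1) (h1 : 0 < (s 1 : ℝ) * a) (h2 : 0 < (s 2 : ℝ) * b)
    (c0 : CR (fun x => x ^ 2 + a * x + b) (fun x => 2 * x + a) (pn 0).1 (pn 0).2)
    (c1 : CR (fun x => 2 * x + a) (fun _ => 2) (pn 1).1 (pn 1).2) :
    Realizable 2 s pn := by
  have k0 : (X ^ 2 + C a * X + C b : ℝ[X]).coeff 0 = b := by simp
  have k1 : (X ^ 2 + C a * X + C b : ℝ[X]).coeff 1 = a := by simp [coeff_X_pow, coeff_C]
  have k2 : (X ^ 2 + C a * X + C b : ℝ[X]).coeff 2 = 1 := by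
    simp [coeff_X_pow, coeff_C, coeff_X]
  have nd : (X ^ 2 + C a * X + C b : ℝ[X]).natDegree = 2 := by compute_degree!
  have ha : a ≠ 0 := by rintro rfl; simp at h1
  have hb : b ≠ 0 := by rintro rfl; simp at h2
  refine ⟨X ^ 2 + C a * X + C b, by monicity!, nd, ?_, ?_, ?_⟩
  · intro j hj
    interval_cases j
    · rw [k0]; exact hb
    · rw [k1]; exact ha
    · rw [k2]; exact one_ne_zero
  · intro i hi
    interval_cases i
    · rw [h0]; norm_num [k2]
    · simpa only [k1] using h1
    · simpa only [k0] using h2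
  · intro k hk
    interval_cases k
    · exact c0.count (by simp [iterDeriv]) (by norm_num [iterDeriv])
    · exact c1.count (by norm_num [iterDeriv]) (by norm_num [iterDeriv])

lemma real_three {s : ℕ → ℤ} {pn : ℕ → ℕ × ℕ} (a b c : ℝ)
    (h0 : s 0 = 1) (h1 : 0 < (s 1 : ℝ) * a) (h2 : 0 < (s 2 : ℝ) * b)
    (h3 : 0 < (s 3 : ℝ) * c)
    (c0 : CR (fun x => x ^ 3 + a * x ^ 2 + b * x + c) (fun x => 3 * x ^ 2 + 2 * a * x + b)
      (pn 0).1 (pn 0).2)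
    (c1 : CR (fun x => 3 * x ^ 2 + 2 * a * x + b) (fun x => 6 * x + 2 * a) (pn 1).1 (pn 1).2)
    (c2 : CR (fun x => 6 * x + 2 * a) (fun _ => 6) (pn 2).1 (pn 2).2) :
    Realizable 3 s pn := by
  have k0 : (X ^ 3 + C a * X ^ 2 + C b * X + C c : ℝ[X]).coeff 0 = c := by simp
  have k1 : (X ^ 3 + C a * X ^ 2 + C b * X + C c : ℝ[X]).coeff 1 = b := by
    simp [coeff_X_pow, coeff_C]
  have k2 : (X ^ 3 + C a * X ^ 2 + C b * X + C c : ℝ[X]).coeff 2 = a := by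
    simp [coeff_X_pow, coeff_C, coeff_X]
  have k3 : (X ^ 3 + C a * X ^ 2 + C b * X + C c : ℝ[X]).coeff 3 = 1 := by
    simp [coeff_X_pow, coeff_C, coeff_X]
  have nd : (X ^ 3 + C a * X ^ 2 + C b * X + C c : ℝ[X]).natDegree = 3 := by compute_degree!
  have ha : a ≠ 0 := by rintro rfl; simp at h1
  have hb : b ≠ 0 := by rintro rfl; simp at h2
  have hc : c ≠ 0 := by rintro rfl; simp at h3
  refine ⟨X ^ 3 + C a * X ^ 2 + C b * X + C c, by monicity!, nd, ?_, ?_, ?_⟩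
  · intro j hj
    interval_cases j
    · rw [k0]; exact hc
    · rw [k1]; exact hb
    · rw [k2]; exact ha
    · rw [k3]; exact one_ne_zero
  · intro i hi
    interval_cases i
    · rw [h0]; norm_num [k3]
    · simpa only [k2] using h1
    · simpa only [k1] using h2
    · simpa only [k0] using h3
  · intro k hk
    interval_cases k
    · exact c0.count (by simp [iterDeriv]) (by intro x; simp [iterDeriv]; ring)
    · exact c1.count (by intro x; simp [iterDeriv]; ring) (by intro x; simp [iterDeriv]; ring)
    · exact c2.count (by intro x; simp [iterDeriv]; ring) (by intro x; simp [iterDeriv]; norm_num)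

set_option maxHeartbeats 2000000 in
/-- For `d = 1, 2, 3`, every couple (sign pattern, SAP) is realizable. -/
theorem stmt6 (d : ℕ) (hd : d = 1 ∨ d = 2 ∨ d = 3) (s : ℕ → ℤ)
    (hs : IsSignPattern d s) (pn : ℕ → ℕ × ℕ) (hpn : IsSAP d s pn) :
    Realizable d s pn := by
  obtain ⟨h0, hs⟩ := hs
  obtain ⟨hA, hB⟩ := hpn
  rcases hd with rfl | rfl | rfl
  · have S1 := hs 1 (by norm_num)
    have A0 := hA 0 (by norm_num)
    clear hA hB hs
    rcases e0 : pn 0 with ⟨p0, n0⟩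
    rcases S1 with S1 | S1 <;>
      simp [signChanges, signPres, Finset.range_add_one, Finset.filter_insert, Finset.filter_singleton, h0, S1, e0, Int.even_iff] at A0
    · have key : (p0 = 0 ∧ n0 = 1) := by omega
      rcases key with ⟨rfl, rfl⟩
      · refine real_one (1) h0 (by norm_num [S1]) ?_
        · rw [e0]
          exact CR.lin_neg
    · have key : (p0 = 1 ∧ n0 = 0) := by omega
      rcases key with ⟨rfl, rfl⟩
      · refine real_one (-1) h0 (by norm_num [S1]) ?_
        · rw [e0]
          exact CR.lin_pos
  · have S1 := hs 1 (by norm_num)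
    have S2 := hs 2 (by norm_num)
    have A0 := hA 0 (by norm_num)
    have A1 := hA 1 (by norm_num)
    have B0 := hB 0 (by norm_num)
    clear hA hB hs
    rcases e0 : pn 0 with ⟨p0, n0⟩
    rcases e1 : pn 1 with ⟨p1, n1⟩
    rcases S1 with S1 | S1 <;> rcases S2 with S2 | S2 <;>
      simp [signChanges, signPres, Finset.range_add_one, Finset.filter_insert, Finset.filter_singleton, h0, S1, S2, e0, e1, Int.even_iff] at A0 A1 B0
    · have key : (p0 = 0 ∧ n0 = 2 ∧ p1 = 0 ∧ n1 = 1) ∨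
          (p0 = 0 ∧ n0 = 0 ∧ p1 = 0 ∧ n1 = 1) := by omega
      rcases key with ⟨rfl, rfl, rfl, rfl⟩ | ⟨rfl, rfl, rfl, rfl⟩
      · refine real_two (3) (2) h0 (by norm_num [S1]) (by norm_num [S2]) ?_ ?_
        · rw [e0]
          exact CR.two 1 (-1) (-2)
        · rw [e1]
          exact CR.lin_neg
      · refine real_two (1) (1) h0 (by norm_num [S1]) (by norm_num [S2]) ?_ ?_
        · rw [e0]
          exact CR.none (fun x => by nlinarith [sq_nonneg (x - 1), sq_nonneg (x + 1), sq_nonneg x])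
        · rw [e1]
          exact CR.lin_neg
    · have key : (p0 = 1 ∧ n0 = 1 ∧ p1 = 0 ∧ n1 = 1) := by omega
      rcases key with ⟨rfl, rfl, rfl, rfl⟩
      · refine real_two (1) (-2) h0 (by norm_num [S1]) (by norm_num [S2]) ?_ ?_
        · rw [e0]
          exact CR.two 1 (1) (-2)
        · rw [e1]
          exact CR.lin_neg
    · have key : (p0 = 2 ∧ n0 = 0 ∧ p1 = 1 ∧ n1 = 0) ∨
          (p0 = 0 ∧ n0 = 0 ∧ p1 = 1 ∧ n1 = 0) := by omega
      rcases key with ⟨rfl, rfl, rfl, rfl⟩ | ⟨rfl, rfl, rfl, rfl⟩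
      · refine real_two (-3) (2) h0 (by norm_num [S1]) (by norm_num [S2]) ?_ ?_
        · rw [e0]
          exact CR.two 1 (1) (2)
        · rw [e1]
          exact CR.lin_pos
      · refine real_two (-1) (1) h0 (by norm_num [S1]) (by norm_num [S2]) ?_ ?_
        · rw [e0]
          exact CR.none (fun x => by nlinarith [sq_nonneg (x - 1), sq_nonneg (x + 1), sq_nonneg x])
        · rw [e1]
          exact CR.lin_pos
    · have key : (p0 = 1 ∧ n0 = 1 ∧ p1 = 1 ∧ n1 = 0) := by omega
      rcases key with ⟨rfl, rfl, rfl, rfl⟩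
      · refine real_two (-1) (-2) h0 (by norm_num [S1]) (by norm_num [S2]) ?_ ?_
        · rw [e0]
          exact CR.two 1 (-1) (2)
        · rw [e1]
          exact CR.lin_pos
  · have S1 := hs 1 (by norm_num)
    have S2 := hs 2 (by norm_num)
    have S3 := hs 3 (by norm_num)
    have A0 := hA 0 (by norm_num)
    have A1 := hA 1 (by norm_num)
    have A2 := hA 2 (by norm_num)
    have B0 := hB 0 (by norm_num)
    have B1 := hB 1 (by norm_num)
    clear hA hB hs
    rcases e0 : pn 0 with ⟨p0, n0⟩
    rcases e1 : pn 1 with ⟨p1, n1⟩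
    rcases e2 : pn 2 with ⟨p2, n2⟩
    rcases S1 with S1 | S1 <;> rcases S2 with S2 | S2 <;> rcases S3 with S3 | S3 <;>
      simp [signChanges, signPres, Finset.range_add_one, Finset.filter_insert, Finset.filter_singleton, h0, S1, S2, S3, e0, e1, e2, Int.even_iff] at A0 A1 A2 B0 B1
    · have key : (p0 = 0 ∧ n0 = 3 ∧ p1 = 0 ∧ n1 = 2 ∧ p2 = 0 ∧ n2 = 1) ∨
          (p0 = 0 ∧ n0 = 1 ∧ p1 = 0 ∧ n1 = 2 ∧ p2 = 0 ∧ n2 = 1) ∨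
          (p0 = 0 ∧ n0 = 1 ∧ p1 = 0 ∧ n1 = 0 ∧ p2 = 0 ∧ n2 = 1) := by omega
      rcases key with ⟨rfl, rfl, rfl, rfl, rfl, rfl⟩ | ⟨rfl, rfl, rfl, rfl, rfl, rfl⟩ | ⟨rfl, rfl, rfl, rfl, rfl, rfl⟩
      · refine real_three (14) (49) (36) h0 (by norm_num [S1]) (by norm_num [S2]) (by norm_num [S3]) ?_ ?_ ?_
        · rw [e0]
          exact CR.three (-4) (-1) (-9)
        · rw [e1]
          exact CR.two 3 (-7) (-7/3)
        · rw [e2]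
          exact CR.lin_neg
      · refine real_three (2) (1) (2) h0 (by norm_num [S1]) (by norm_num [S2]) (by norm_num [S3]) ?_ ?_ ?_
        · rw [e0]
          exact CR.one (-2) (0) (1)
        · rw [e1]
          exact CR.two 3 (-1) (-1/3)
        · rw [e2]
          exact CR.lin_neg
      · refine real_three (1) (1) (1) h0 (by norm_num [S1]) (by norm_num [S2]) (by norm_num [S3]) ?_ ?_ ?_
        · rw [e0]
          exact CR.one (-1) (0) (1)
        · rw [e1]
          exact CR.none (fun x => by nlinarith [sq_nonneg (x - 1), sq_nonneg (x + 1), sq_nonneg x])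
        · rw [e2]
          exact CR.lin_neg
    · have key : (p0 = 1 ∧ n0 = 2 ∧ p1 = 0 ∧ n1 = 2 ∧ p2 = 0 ∧ n2 = 1) ∨
          (p0 = 1 ∧ n0 = 0 ∧ p1 = 0 ∧ n1 = 2 ∧ p2 = 0 ∧ n2 = 1) ∨
          (p0 = 1 ∧ n0 = 0 ∧ p1 = 0 ∧ n1 = 0 ∧ p2 = 0 ∧ n2 = 1) := by omega
      rcases key with ⟨rfl, rfl, rfl, rfl, rfl, rfl⟩ | ⟨rfl, rfl, rfl, rfl, rfl, rfl⟩ | ⟨rfl, rfl, rfl, rfl, rfl, rfl⟩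
      · refine real_three (8) (5) (-14) h0 (by norm_num [S1]) (by norm_num [S2]) (by norm_num [S3]) ?_ ?_ ?_
        · rw [e0]
          exact CR.three (-2) (1) (-7)
        · rw [e1]
          exact CR.two 3 (-5) (-1/3)
        · rw [e2]
          exact CR.lin_neg
      · refine real_three (2) (1) (-4) h0 (by norm_num [S1]) (by norm_num [S2]) (by norm_num [S3]) ?_ ?_ ?_
        · rw [e0]
          exact CR.one (1) (3) (4)
        · rw [e1]
          exact CR.two 3 (-1) (-1/3)
        · rw [e2]
          exact CR.lin_neg
      · refine real_three (1) (1) (-3) h0 (by norm_num [S1]) (by norm_num [S2]) (by norm_num [S3]) ?_ ?_ ?_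
        · rw [e0]
          exact CR.one (1) (2) (3)
        · rw [e1]
          exact CR.none (fun x => by nlinarith [sq_nonneg (x - 1), sq_nonneg (x + 1), sq_nonneg x])
        · rw [e2]
          exact CR.lin_neg
    · have key : (p0 = 2 ∧ n0 = 1 ∧ p1 = 1 ∧ n1 = 1 ∧ p2 = 0 ∧ n2 = 1) ∨
          (p0 = 0 ∧ n0 = 1 ∧ p1 = 1 ∧ n1 = 1 ∧ p2 = 0 ∧ n2 = 1) := by omega
      rcases key with ⟨rfl, rfl, rfl, rfl, rfl, rfl⟩ | ⟨rfl, rfl, rfl, rfl, rfl, rfl⟩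
      · refine real_three (1) (-65) (63) h0 (by norm_num [S1]) (by norm_num [S2]) (by norm_num [S3]) ?_ ?_ ?_
        · rw [e0]
          exact CR.three (1) (7) (-9)
        · rw [e1]
          exact CR.two 3 (-5) (13/3)
        · rw [e2]
          exact CR.lin_neg
      · refine real_three (1) (-1) (2) h0 (by norm_num [S1]) (by norm_num [S2]) (by norm_num [S3]) ?_ ?_ ?_
        · rw [e0]
          exact CR.one (-2) (-1) (1)
        · rw [e1]
          exact CR.two 3 (-1) (1/3)
        · rw [e2]
          exact CR.lin_neg
    · have key : (p0 = 1 ∧ n0 = 2 ∧ p1 = 1 ∧ n1 = 1 ∧ p2 = 0 ∧ n2 = 1) ∨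
          (p0 = 1 ∧ n0 = 0 ∧ p1 = 1 ∧ n1 = 1 ∧ p2 = 0 ∧ n2 = 1) := by omega
      rcases key with ⟨rfl, rfl, rfl, rfl, rfl, rfl⟩ | ⟨rfl, rfl, rfl, rfl, rfl, rfl⟩
      · refine real_three (5) (-8) (-12) h0 (by norm_num [S1]) (by norm_num [S2]) (by norm_num [S3]) ?_ ?_ ?_
        · rw [e0]
          exact CR.three (-1) (2) (-6)
        · rw [e1]
          exact CR.two 3 (-4) (2/3)
        · rw [e2]
          exact CR.lin_neg
      · refine real_three (1) (-1) (-10) h0 (by norm_num [S1]) (by norm_num [S2]) (by norm_num [S3]) ?_ ?_ ?_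
        · rw [e0]
          exact CR.one (2) (3) (5)
        · rw [e1]
          exact CR.two 3 (-1) (1/3)
        · rw [e2]
          exact CR.lin_neg
    · have key : (p0 = 2 ∧ n0 = 1 ∧ p1 = 2 ∧ n1 = 0 ∧ p2 = 1 ∧ n2 = 0) ∨
          (p0 = 0 ∧ n0 = 1 ∧ p1 = 2 ∧ n1 = 0 ∧ p2 = 1 ∧ n2 = 0) ∨
          (p0 = 0 ∧ n0 = 1 ∧ p1 = 0 ∧ n1 = 0 ∧ p2 = 1 ∧ n2 = 0) := by omega
      rcases key with ⟨rfl, rfl, rfl, rfl, rfl, rfl⟩ | ⟨rfl, rfl, rfl, rfl, rfl, rfl⟩ | ⟨rfl, rfl, rfl, rfl, rfl, rfl⟩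
      · refine real_three (-8) (5) (14) h0 (by norm_num [S1]) (by norm_num [S2]) (by norm_num [S3]) ?_ ?_ ?_
        · rw [e0]
          exact CR.three (2) (7) (-1)
        · rw [e1]
          exact CR.two 3 (1/3) (5)
        · rw [e2]
          exact CR.lin_pos
      · refine real_three (-2) (1) (4) h0 (by norm_num [S1]) (by norm_num [S2]) (by norm_num [S3]) ?_ ?_ ?_
        · rw [e0]
          exact CR.one (-1) (-3) (4)
        · rw [e1]
          exact CR.two 3 (1/3) (1)
        · rw [e2]
          exact CR.lin_pos
      · refine real_three (-1) (1) (3) h0 (by norm_num [S1]) (by norm_num [S2]) (by norm_num [S3]) ?_ ?_ ?_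
        · rw [e0]
          exact CR.one (-1) (-2) (3)
        · rw [e1]
          exact CR.none (fun x => by nlinarith [sq_nonneg (x - 1), sq_nonneg (x + 1), sq_nonneg x])
        · rw [e2]
          exact CR.lin_pos
    · have key : (p0 = 3 ∧ n0 = 0 ∧ p1 = 2 ∧ n1 = 0 ∧ p2 = 1 ∧ n2 = 0) ∨
          (p0 = 1 ∧ n0 = 0 ∧ p1 = 2 ∧ n1 = 0 ∧ p2 = 1 ∧ n2 = 0) ∨
          (p0 = 1 ∧ n0 = 0 ∧ p1 = 0 ∧ n1 = 0 ∧ p2 = 1 ∧ n2 = 0) := by omega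
      rcases key with ⟨rfl, rfl, rfl, rfl, rfl, rfl⟩ | ⟨rfl, rfl, rfl, rfl, rfl, rfl⟩ | ⟨rfl, rfl, rfl, rfl, rfl, rfl⟩
      · refine real_three (-14) (49) (-36) h0 (by norm_num [S1]) (by norm_num [S2]) (by norm_num [S3]) ?_ ?_ ?_
        · rw [e0]
          exact CR.three (4) (9) (1)
        · rw [e1]
          exact CR.two 3 (7/3) (7)
        · rw [e2]
          exact CR.lin_pos
      · refine real_three (-2) (1) (-2) h0 (by norm_num [S1]) (by norm_num [S2]) (by norm_num [S3]) ?_ ?_ ?_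
        · rw [e0]
          exact CR.one (2) (0) (1)
        · rw [e1]
          exact CR.two 3 (1/3) (1)
        · rw [e2]
          exact CR.lin_pos
      · refine real_three (-1) (1) (-1) h0 (by norm_num [S1]) (by norm_num [S2]) (by norm_num [S3]) ?_ ?_ ?_
        · rw [e0]
          exact CR.one (1) (0) (1)
        · rw [e1]
          exact CR.none (fun x => by nlinarith [sq_nonneg (x - 1), sq_nonneg (x + 1), sq_nonneg x])
        · rw [e2]
          exact CR.lin_pos
    · have key : (p0 = 2 ∧ n0 = 1 ∧ p1 = 1 ∧ n1 = 1 ∧ p2 = 1 ∧ n2 = 0) ∨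
          (p0 = 0 ∧ n0 = 1 ∧ p1 = 1 ∧ n1 = 1 ∧ p2 = 1 ∧ n2 = 0) := by omega
      rcases key with ⟨rfl, rfl, rfl, rfl, rfl, rfl⟩ | ⟨rfl, rfl, rfl, rfl, rfl, rfl⟩
      · refine real_three (-5) (-8) (12) h0 (by norm_num [S1]) (by norm_num [S2]) (by norm_num [S3]) ?_ ?_ ?_
        · rw [e0]
          exact CR.three (1) (6) (-2)
        · rw [e1]
          exact CR.two 3 (-2/3) (4)
        · rw [e2]
          exact CR.lin_pos
      · refine real_three (-1) (-1) (10) h0 (by norm_num [S1]) (by norm_num [S2]) (by norm_num [S3]) ?_ ?_ ?_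
        · rw [e0]
          exact CR.one (-2) (-3) (5)
        · rw [e1]
          exact CR.two 3 (-1/3) (1)
        · rw [e2]
          exact CR.lin_pos
    · have key : (p0 = 1 ∧ n0 = 2 ∧ p1 = 1 ∧ n1 = 1 ∧ p2 = 1 ∧ n2 = 0) ∨
          (p0 = 1 ∧ n0 = 0 ∧ p1 = 1 ∧ n1 = 1 ∧ p2 = 1 ∧ n2 = 0) := by omega
      rcases key with ⟨rfl, rfl, rfl, rfl, rfl, rfl⟩ | ⟨rfl, rfl, rfl, rfl, rfl, rfl⟩
      · refine real_three (-1) (-65) (-63) h0 (by norm_num [S1]) (by norm_num [S2]) (by norm_num [S3]) ?_ ?_ ?_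
        · rw [e0]
          exact CR.three (-1) (9) (-7)
        · rw [e1]
          exact CR.two 3 (-13/3) (5)
        · rw [e2]
          exact CR.lin_pos
      · refine real_three (-1) (-1) (-2) h0 (by norm_num [S1]) (by norm_num [S2]) (by norm_num [S3]) ?_ ?_ ?_
        · rw [e0]
          exact CR.one (2) (1) (1)
        · rw [e1]
          exact CR.two 3 (-1/3) (1)
        · rw [e2]
          exact CR.lin_pos
end

section
/- Let A(d) denote the number of sequences of admissible pairs for the all-pluses sign pattern of length d+1. Then for every even integer d ≥ 2 one has A(d) ≥ 2·A(d−1), and for every odd integer d ≥ 3 one has 2·A(d) ≥ 3·A(d−1). -/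
open Polynomial

/-- The all-pluses sign pattern. -/
def allPlus : ℕ → ℤ := fun _ => 1

/-- Extend a finite sequence of pairs to `ℕ` (by `(0,0)` beyond `d`). -/
def extendPN (d : ℕ) (pn : Fin d → ℕ × ℕ) : ℕ → ℕ × ℕ :=
  fun k => if hk : k < d then pn ⟨k, hk⟩ else (0, 0)

/-- `A d` is the number of SAPs for the all-pluses sign pattern of length `d+1`. -/
noncomputable def A (d : ℕ) : ℕ :=
  {pn : Fin d → ℕ × ℕ | IsSAP d allPlus (extendPN d pn)}.ncard

/-- `hNum d m` is the number of SAPs for the all-pluses sign pattern of length `d+1`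
whose first pair is `(0, m)`. -/
noncomputable def hNum (d m : ℕ) : ℕ :=
  {pn : Fin d → ℕ × ℕ |
    IsSAP d allPlus (extendPN d pn) ∧ extendPN d pn 0 = (0, m)}.ncard


lemma sc_allPlus (n : ℕ) : signChanges allPlus n = 0 := by
  simp [signChanges, allPlus]

lemma sp_allPlus (n : ℕ) : signPres allPlus n = n := by
  simp [signPres, allPlus]

lemma isSAP_iff (d : ℕ) (f : ℕ → ℕ × ℕ) : IsSAP d allPlus f ↔
    (∀ k < d, (f k).1 = 0 ∧ (f k).2 ≤ d - k ∧ (f k).2 % 2 = (d - k) % 2) ∧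
    (∀ k, k + 1 < d → (f k).2 ≤ (f (k+1)).2 + 1) := by
  unfold IsSAP
  simp only [sc_allPlus, sp_allPlus]
  constructor
  · rintro ⟨h1, h2⟩
    refine ⟨fun k hk => ?_, fun k hk => (h2 k hk).2.1⟩
    obtain ⟨a, b, c, e, g⟩ := h1 k hk
    refine ⟨by omega, c, ?_⟩
    rw [Int.even_iff] at e
    omega
  · rintro ⟨h1, h2⟩
    refine ⟨fun k hk => ?_, fun k hk => ?_⟩
    · obtain ⟨a, b, c⟩ := h1 k hk
      refine ⟨by omega, by simp [a], b, ?_, by simp [a, allPlus]⟩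
      rw [Int.even_iff]; omega
    · obtain ⟨a, b, c⟩ := h1 k (by omega)
      obtain ⟨a', b', c'⟩ := h1 (k+1) hk
      have := h2 k hk
      refine ⟨by omega, this, by omega, ?_⟩
      rw [Int.even_iff]; omega

def SS (d : ℕ) : Set (Fin d → ℕ × ℕ) := {pn | IsSAP d allPlus (extendPN d pn)}

lemma ext_zero (d : ℕ) (x : ℕ × ℕ) (p : Fin d → ℕ × ℕ) :
    extendPN (d+1) (Fin.cons x p : Fin (d+1) → ℕ × ℕ) 0 = x := by
  simp [extendPN]

lemma ext_succ (d : ℕ) (x : ℕ × ℕ) (p : Fin d → ℕ × ℕ) (k : ℕ) :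
    extendPN (d+1) (Fin.cons x p : Fin (d+1) → ℕ × ℕ) (k+1) = extendPN d p k := by
  unfold extendPN
  by_cases h : k < d
  · rw [dif_pos h, dif_pos (by omega)]
    exact Fin.cons_succ (α := fun _ => ℕ × ℕ) x p ⟨k, h⟩
  · rw [dif_neg h, dif_neg (by omega)]

lemma cons_mem (d : ℕ) (x : ℕ × ℕ) (p : Fin d → ℕ × ℕ) :
    (Fin.cons x p : Fin (d+1) → ℕ × ℕ) ∈ SS (d+1) ↔
    p ∈ SS d ∧ x.1 = 0 ∧ x.2 ≤ d + 1 ∧ x.2 % 2 = (d+1) % 2 ∧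
      (0 < d → x.2 ≤ (extendPN d p 0).2 + 1) := by
  simp only [SS, Set.mem_ofPred_eq, isSAP_iff]
  constructor
  · rintro ⟨h1, h2⟩
    have h0 := h1 0 (by omega)
    rw [ext_zero] at h0
    refine ⟨⟨fun k hk => ?_, fun k hk => ?_⟩, h0.1, by omega, by omega, fun hd => ?_⟩
    · have := h1 (k+1) (by omega)
      rw [ext_succ] at this
      refine ⟨this.1, by omega, by omega⟩
    · have := h2 (k+1) (by omega)
      rwa [ext_succ, ext_succ] at this
    · have := h2 0 (by omega)
      rwa [ext_succ, ext_zero] at this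
  · rintro ⟨⟨h1, h2⟩, a, b, c, e⟩
    constructor
    · rintro (_ | k) hk
      · rw [ext_zero]; exact ⟨a, by omega, by omega⟩
      · rw [ext_succ]
        have := h1 k (by omega)
        exact ⟨this.1, by omega, by omega⟩
    · rintro (_ | k) hk
      · rw [ext_zero, ext_succ]; exact e (by omega)
      · rw [ext_succ, ext_succ]; exact h2 k (by omega)

lemma SS_finite (d : ℕ) : (SS d).Finite := by
  apply Set.Finite.subset (Set.Finite.pi' (fun _ : Fin d =>
    ((Set.finite_Iic 0).prod (Set.finite_Iic d) : ((Set.Iic 0 : Set ℕ) ×ˢ (Set.Iic d : Set ℕ)).Finite)))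
  intro p hp i
  rw [SS, Set.mem_ofPred_eq, isSAP_iff] at hp
  have := hp.1 i i.2
  simp only [extendPN, i.2, dif_pos, Fin.eta] at this
  simp only [Set.mem_prod, Set.mem_Iic]
  omega

lemma cons_card (d : ℕ) (x : ℕ × ℕ) (S : Set (Fin d → ℕ × ℕ)) :
    ((fun p => (Fin.cons x p : Fin (d+1) → ℕ × ℕ)) '' S).ncard = S.ncard :=
  Set.ncard_image_of_injective _ (Fin.cons_right_injective (α := fun _ => ℕ × ℕ) x)

lemma two_cons (d : ℕ) (x y : ℕ × ℕ) (hxy : x ≠ y) (S T : Set (Fin d → ℕ × ℕ))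
    (hS : ∀ p ∈ S, (Fin.cons x p : Fin (d+1) → ℕ × ℕ) ∈ SS (d+1))
    (hT : ∀ p ∈ T, (Fin.cons y p : Fin (d+1) → ℕ × ℕ) ∈ SS (d+1)) :
    S.ncard + T.ncard ≤ A (d+1) := by
  set S' := (fun p => (Fin.cons x p : Fin (d+1) → ℕ × ℕ)) '' S with hS'
  set T' := (fun p => (Fin.cons y p : Fin (d+1) → ℕ × ℕ)) '' T with hT'
  have s1 : S' ⊆ SS (d+1) := by rintro _ ⟨p, hp, rfl⟩; exact hS p hp
  have s2 : T' ⊆ SS (d+1) := by rintro _ ⟨p, hp, rfl⟩; exact hT p hp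
  have hd : Disjoint S' T' := by
    rw [Set.disjoint_left]
    rintro _ ⟨p, hp, rfl⟩ ⟨q, hq, h⟩
    have := congrFun h 0
    simp only [Fin.cons_zero] at this
    exact hxy this.symm
  rw [← cons_card d x S, ← cons_card d y T,
    ← Set.ncard_union_eq hd ((SS_finite _).subset s1) ((SS_finite _).subset s2)]
  exact Set.ncard_le_ncard (Set.union_subset s1 s2) (SS_finite _)

lemma even_case (d : ℕ) (hd : 2 ≤ d) (he : Even d) : 2 * A (d - 1) ≤ A d := by
  obtain ⟨e, rfl⟩ : ∃ e, d = e + 1 := ⟨d - 1, by omega⟩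
  rw [Nat.even_iff] at he
  have key : ∀ p ∈ SS e, 1 ≤ (extendPN e p 0).2 := by
    intro p hp
    rw [SS, Set.mem_ofPred_eq, isSAP_iff] at hp
    have := hp.1 0 (by omega)
    omega
  have := two_cons e (0,0) (0,2) (by simp) (SS e) (SS e)
    (fun p hp => (cons_mem _ _ _).2 ⟨hp, rfl, by simp, by simp; omega, fun _ => by simp⟩)
    (fun p hp => (cons_mem _ _ _).2 ⟨hp, rfl, by simp; omega, by simp; omega,
      fun _ => by have := key p hp; simp; omega⟩)
  have hA : A e = (SS e).ncard := rfl
  rw [Nat.add_sub_cancel]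
  omega

lemma odd_case (d : ℕ) (hd : 3 ≤ d) (ho : Odd d) : 3 * A (d - 1) ≤ 2 * A d := by
  obtain ⟨e, rfl⟩ : ∃ e, d = e + 1 + 1 := ⟨d - 2, by omega⟩
  rw [Nat.odd_iff] at ho
  have hev := even_case (e+1) (by omega) (by rw [Nat.even_iff]; omega)
  rw [Nat.add_sub_cancel] at hev ⊢
  set Z : Set (Fin (e+1) → ℕ × ℕ) := (fun p => (Fin.cons (0,0) p : Fin (e+1) → ℕ × ℕ)) '' SS e
  have hZc : Z.ncard = A e := cons_card e (0,0) (SS e)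
  have hZ : Z ⊆ SS (e+1) := by
    rintro _ ⟨p, hp, rfl⟩
    exact (cons_mem _ _ _).2 ⟨hp, rfl, by simp, by simp; omega, fun _ => by simp⟩
  have hA : A (e+1) = (SS (e+1)).ncard := rfl
  have hsplit := Set.ncard_sdiff_add_ncard_of_subset hZ (SS_finite _)
  have := two_cons (e+1) (0,1) (0,3) (by simp) (SS (e+1)) (SS (e+1) \ Z)
    (fun p hp => (cons_mem _ _ _).2 ⟨hp, rfl, by simp, by simp; omega, fun _ => by simp⟩)
    (fun p hp => (cons_mem _ _ _).2 ⟨hp.1, rfl, by simp; omega, by simp; omega, fun _ => by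
      obtain ⟨h1, h2⟩ := hp
      by_contra hlt
      apply h2
      obtain ⟨x, q, rfl⟩ : ∃ x q, p = (Fin.cons x q : Fin (e+1) → ℕ × ℕ) :=
        ⟨p 0, Fin.tail p, (Fin.cons_self_tail p).symm⟩
      rw [ext_zero] at hlt
      obtain ⟨a, b, c, f, g⟩ := (cons_mem _ _ _).1 h1
      refine ⟨q, a, ?_⟩
      have : x = (0,0) := Prod.ext b (by simp at hlt ⊢; omega)
      rw [this]⟩)
  omega

/-- For even `d ≥ 2` one has `A d ≥ 2 A (d-1)`; for odd `d ≥ 3`, `2 A d ≥ 3 A (d-1)`. -/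
theorem stmt9 :
    (∀ d : ℕ, 2 ≤ d → Even d → 2 * A (d - 1) ≤ A d) ∧
    (∀ d : ℕ, 3 ≤ d → Odd d → 3 * A (d - 1) ≤ 2 * A d) :=
  ⟨even_case, odd_case⟩
end

section
/- For a real number a > 0, let S(x) := (x+1)^3 (x−a)^2, a monic real polynomial of degree 5. The coefficient of x^4 in S is positive if and only if a < 3/2. Moreover, the sequence of signs of the coefficients of S (from the leading coefficient down to the constant term) equals: (+,+,+,+,−,+) for a ∈ (0, (3−√6)/3); (+,+,+,−,−,+) for a ∈ ((3−√6)/3, 3−√6); (+,+,−,−,−,+) for a ∈ (3−√6, 2/3); and (+,+,−,−,+,+) for a ∈ (2/3, 3/2). -/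
open Polynomial

/-- Signs of the coefficients of `S = (x+1)^3 (x-a)^2`, `a > 0`. -/
theorem stmt10 (a : ℝ) (ha : 0 < a)
    (S : Polynomial ℝ)
    (hS : S = (Polynomial.X + 1) ^ 3 * (Polynomial.X - Polynomial.C a) ^ 2) :
    (0 < S.coeff 4 ↔ a < 3 / 2) ∧
    (a < (3 - Real.sqrt 6) / 3 →
      0 < S.coeff 5 ∧ 0 < S.coeff 4 ∧ 0 < S.coeff 3 ∧ 0 < S.coeff 2 ∧
        S.coeff 1 < 0 ∧ 0 < S.coeff 0) ∧
    ((3 - Real.sqrt 6) / 3 < a → a < 3 - Real.sqrt 6 →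
      0 < S.coeff 5 ∧ 0 < S.coeff 4 ∧ 0 < S.coeff 3 ∧ S.coeff 2 < 0 ∧
        S.coeff 1 < 0 ∧ 0 < S.coeff 0) ∧
    (3 - Real.sqrt 6 < a → a < 2 / 3 →
      0 < S.coeff 5 ∧ 0 < S.coeff 4 ∧ S.coeff 3 < 0 ∧ S.coeff 2 < 0 ∧
        S.coeff 1 < 0 ∧ 0 < S.coeff 0) ∧
    (2 / 3 < a → a < 3 / 2 →
      0 < S.coeff 5 ∧ 0 < S.coeff 4 ∧ S.coeff 3 < 0 ∧ S.coeff 2 < 0 ∧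
        0 < S.coeff 1 ∧ 0 < S.coeff 0) := by
  have hexp : S = C 1 * X ^ 5 + C (3 - 2 * a) * X ^ 4 + C (3 - 6 * a + a ^ 2) * X ^ 3
      + C (1 - 6 * a + 3 * a ^ 2) * X ^ 2 + C (3 * a ^ 2 - 2 * a) * X ^ 1
      + C (a ^ 2) * X ^ 0 := by
    rw [hS]
    simp only [map_add, map_sub, map_mul, map_pow, map_one, map_ofNat]
    ring
  have h5 : S.coeff 5 = 1 := by
    rw [hexp]; simp only [coeff_add, coeff_C_mul_X_pow]; norm_num
  have h4 : S.coeff 4 = 3 - 2 * a := by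
    rw [hexp]; simp only [coeff_add, coeff_C_mul_X_pow]; norm_num
  have h3 : S.coeff 3 = 3 - 6 * a + a ^ 2 := by
    rw [hexp]; simp only [coeff_add, coeff_C_mul_X_pow]; norm_num
  have h2 : S.coeff 2 = 1 - 6 * a + 3 * a ^ 2 := by
    rw [hexp]; simp only [coeff_add, coeff_C_mul_X_pow]; norm_num
  have h1 : S.coeff 1 = 3 * a ^ 2 - 2 * a := by
    rw [hexp]; simp only [coeff_add, coeff_C_mul_X_pow]; norm_num
  have h0 : S.coeff 0 = a ^ 2 := by
    rw [hexp]; simp only [coeff_add, coeff_C_mul_X_pow]; norm_num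
  rw [h5, h4, h3, h2, h1, h0]
  have hs : Real.sqrt 6 ^ 2 = 6 := Real.sq_sqrt (by norm_num)
  have hl : 2.4 < Real.sqrt 6 := Real.lt_sqrt_of_sq_lt (by norm_num)
  have hu : Real.sqrt 6 < 2.5 := by
    rw [Real.sqrt_lt' (by norm_num)]; norm_num
  generalize Real.sqrt 6 = s at *
  norm_num at hl hu
  have e3 : 3 - 6 * a + a ^ 2 = (3 - s - a) * (3 + s - a) := by linear_combination hs
  have e2 : 1 - 6 * a + 3 * a ^ 2 = (3 - s - 3 * a) * (3 + s - 3 * a) / 3 := by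
    linear_combination hs / 3
  have p0 : 0 < a ^ 2 := by positivity
  have p3 : a < 3 - s → a < 3 / 2 → 0 < 3 - 6 * a + a ^ 2 := fun h h' => by
    rw [e3]; exact mul_pos (by linarith) (by linarith)
  have n3 : 3 - s < a → a < 3 / 2 → 3 - 6 * a + a ^ 2 < 0 := fun h h' => by
    rw [e3]; exact mul_neg_of_neg_of_pos (by linarith) (by linarith)
  have p2 : a < (3 - s) / 3 → a < 3 / 2 → 0 < 1 - 6 * a + 3 * a ^ 2 := fun h h' => by
    rw [e2]; exact div_pos (mul_pos (by linarith) (by linarith)) (by norm_num)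
  have n2 : (3 - s) / 3 < a → a < 3 / 2 → 1 - 6 * a + 3 * a ^ 2 < 0 := fun h h' => by
    rw [e2]
    exact div_neg_of_neg_of_pos (mul_neg_of_neg_of_pos (by linarith) (by linarith)) (by norm_num)
  have n1 : a < 2 / 3 → 3 * a ^ 2 - 2 * a < 0 := fun h => by nlinarith
  have p1 : 2 / 3 < a → 0 < 3 * a ^ 2 - 2 * a := fun h => by nlinarith
  refine ⟨⟨fun h => by linarith, fun h => by linarith⟩, fun h => ?_, fun h h' => ?_,
    fun h h' => ?_, fun h h' => ?_⟩
  · exact ⟨one_pos, by linarith, p3 (by linarith) (by linarith), p2 h (by linarith),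
      n1 (by linarith), p0⟩
  · exact ⟨one_pos, by linarith, p3 h' (by linarith), n2 h (by linarith), n1 (by linarith), p0⟩
  · exact ⟨one_pos, by linarith, n3 h (by linarith), n2 (by linarith) (by linarith), n1 h', p0⟩
  · exact ⟨one_pos, by linarith, n3 (by linarith) h', n2 (by linarith) h', p1 h, p0⟩
end

section
/- For a real number a > 0, let T(x) := (x+a)^2 (x−1)^3, a monic real polynomial of degree 5. The coefficient of x^4 in T is positive if and only if a > 3/2. Moreover, the sequence of signs of the coefficients of T (from the leading coefficient down to the constant term) equals: (+,+,−,+,+,−) for a ∈ (3/2, (3+√6)/3); (+,+,−,−,+,−) for a ∈ ((3+√6)/3, 3+√6); and (+,+,+,−,+,−) for a > 3+√6. -/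
open Polynomial

/-- Signs of the coefficients of `T = (x+a)^2 (x-1)^3`, `a > 0`. -/
theorem stmt11 (a : ℝ) (ha : 0 < a)
    (T : Polynomial ℝ)
    (hT : T = (Polynomial.X + Polynomial.C a) ^ 2 * (Polynomial.X - 1) ^ 3) :
    (0 < T.coeff 4 ↔ 3 / 2 < a) ∧
    (3 / 2 < a → a < (3 + Real.sqrt 6) / 3 →
      0 < T.coeff 5 ∧ 0 < T.coeff 4 ∧ T.coeff 3 < 0 ∧ 0 < T.coeff 2 ∧
        0 < T.coeff 1 ∧ T.coeff 0 < 0) ∧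
    ((3 + Real.sqrt 6) / 3 < a → a < 3 + Real.sqrt 6 →
      0 < T.coeff 5 ∧ 0 < T.coeff 4 ∧ T.coeff 3 < 0 ∧ T.coeff 2 < 0 ∧
        0 < T.coeff 1 ∧ T.coeff 0 < 0) ∧
    (3 + Real.sqrt 6 < a →
      0 < T.coeff 5 ∧ 0 < T.coeff 4 ∧ 0 < T.coeff 3 ∧ T.coeff 2 < 0 ∧
        0 < T.coeff 1 ∧ T.coeff 0 < 0) := by
  have hexp : T = C 1 * X ^ 5 + C (2 * a - 3) * X ^ 4 + C (a ^ 2 - 6 * a + 3) * X ^ 3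
      + C (-3 * a ^ 2 + 6 * a - 1) * X ^ 2 + C (3 * a ^ 2 - 2 * a) * X ^ 1
      + C (-a ^ 2) * X ^ 0 := by
    rw [hT]
    simp only [map_add, map_sub, map_mul, map_pow, map_neg, map_one, map_ofNat]
    ring
  have h5 : T.coeff 5 = 1 := by
    rw [hexp]; simp only [coeff_add, coeff_C_mul, coeff_X_pow]; norm_num
  have h4 : T.coeff 4 = 2 * a - 3 := by
    rw [hexp]; simp only [coeff_add, coeff_C_mul, coeff_X_pow]; norm_num
  have h3 : T.coeff 3 = a ^ 2 - 6 * a + 3 := by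
    rw [hexp]; simp only [coeff_add, coeff_C_mul, coeff_X_pow]; norm_num
  have h2 : T.coeff 2 = -3 * a ^ 2 + 6 * a - 1 := by
    rw [hexp]; simp only [coeff_add, coeff_C_mul, coeff_X_pow]; norm_num
  have h1 : T.coeff 1 = 3 * a ^ 2 - 2 * a := by
    rw [hexp]; simp only [coeff_add, coeff_C_mul, coeff_X_pow]; norm_num
  have h0 : T.coeff 0 = -a ^ 2 := by
    rw [hexp]; simp only [coeff_add, coeff_C_mul, coeff_X_pow]; norm_num
  rw [h5, h4, h3, h2, h1, h0]
  have hs : Real.sqrt 6 ^ 2 = 6 := Real.sq_sqrt (by norm_num)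
  have hl : 2.4 < Real.sqrt 6 := Real.lt_sqrt_of_sq_lt (by norm_num)
  have hu : Real.sqrt 6 < 2.5 := by
    rw [Real.sqrt_lt' (by norm_num)]; norm_num
  generalize Real.sqrt 6 = s at *
  norm_num at hl hu
  have ha2 : 0 < a ^ 2 := by positivity
  refine ⟨⟨fun h => by linarith, fun h => by linarith⟩, fun hA hB => ?_, fun hA hB => ?_,
    fun hA => ?_⟩
  · have e1 : 0 < (3 + s - a) * (a - 3 + s) := mul_pos (by linarith) (by linarith)
    have e2 : 0 < (3 + s - 3 * a) * (3 * a - 3 + s) := mul_pos (by linarith) (by linarith)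
    have e3 : 0 < a * (3 * a - 2) := mul_pos ha (by linarith)
    refine ⟨?_, ?_, ?_, ?_, ?_, ?_⟩ <;> linarith
  · have e1 : 0 < (3 + s - a) * (a - 3 + s) := mul_pos (by linarith) (by linarith)
    have e2 : 0 < (3 * a - 3 - s) * (3 * a - 3 + s) := mul_pos (by linarith) (by linarith)
    have e3 : 0 < a * (3 * a - 2) := mul_pos ha (by linarith)
    refine ⟨?_, ?_, ?_, ?_, ?_, ?_⟩ <;> linarith
  · have e1 : 0 < (a - 3 - s) * (a - 3 + s) := mul_pos (by linarith) (by linarith)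
    have e2 : 0 < (3 * a - 3 - s) * (3 * a - 3 + s) := mul_pos (by linarith) (by linarith)
    have e3 : 0 < a * (3 * a - 2) := mul_pos ha (by linarith)
    refine ⟨?_, ?_, ?_, ?_, ?_, ?_⟩ <;> linarith
end
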